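/- Let (R, m) be a catenary equidimensional Noetherian local ring of dimension t. There exists a positive integer ℓ, depending only on R, with the following property: whenever x = x_1, ..., x_t is a system of parameters of R with (x_1, ..., x_t) ⊆ m^ℓ and y = y_1, ..., y_t is a sequence of elements with (y) ⊆^A (x) for some t×t matrix A over R, then y is a system of parameters of R if and only if the determinantal map det(A): R/(x)^lim → R/(y)^lim is injective. -/

import Mathlib

/-!
If `x` and `y` both generate `m`-primary ideals, the determinantal map `R/(x)^lim → R/(y)^lim` is
injective for formal reasons (`mem_limitClosure_of_det_mul_mem`): up to determinantal maps back and
forth, `R/(x)^lim` depends only on the radical of `(x)`. The content is the converse. If `y` is not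
`m`-primary, it lies in a prime `p ≠ m` directly below `m`. Let `detKer p x` be the ideal of all `a`
killed by *every* determinantal map from `x` to a sequence inside `p`. It suffices to find an
element of `detKer p` outside the limit closure, at one level `z ^ n` that works for all `p`.

*Uniformity.* The limit of the modules `R/(zⁿ)^lim` along a system of parameters `z` is the top
local cohomology module of `R`. It is Artinian, so its socle is finitely generated and comes from
`R/(z^n)^lim` for a single `n`. Hence a nonzero determinantal kernel, at whatever level it is found,
is already visible for `z ^ n`, and `ℓ` is chosen with `m ^ ℓ ⊆ (z ^ n)`, so that every `x ⊆ m ^ ℓ`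
receives an injective determinantal map from `z ^ n`. That top local cohomology is Artinian follows
from Melkersson's criterion (`isArtinian_of_isArtinian_ker_lsmul`) applied to Čech complexes, viewed
as iterated cones of differential modules (`DiffModule.isArtinian_cech_quotient`).

*Nonvanishing.* Let `D` be a local domain of dimension at most `r + 1` and let `p` be a prime of
height at least `r` directly below `m`. By induction on `r`, every `b ≠ 0` has a multiple `b * a`
outside `(x)^lim` for some system of parameters `x` with `a ∈ detKer p x` (`detectsDetKer`). A
generic `z ∈ p` is chosen so that limit closures of sequences beginning with `z ^ s` are controlled
by limit closures modulo `z ^ s`, up to multiplication by `p ^ e` with `e` independent of `s`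
(`exists_forGeneric_carriesLimitClosure`); this is a statement about Artinian modules
(`hasGenericDivisibility`) applied to the `z`-power torsion of a top local cohomology module. For
`r = 1` one concludes with Krull's intersection theorem in the localization at `p`; for larger `r`
the induction hypothesis is applied in a quotient of `D/(z)` by a minimal prime, and classes are
lifted back by `exists_lift_detKer`.

For `R` itself take a minimal prime `P ⊆ p`. Equidimensionality gives `dim R/P = t` and catenarity
gives that `p/P` has height `t - 1`, so nonvanishing holds in `R/P` and lifts to `R`.
-/

open IsLocalRing

/-- The limit closure `(x)^lim = ⋃_{n>0} ((x₁^{n+1}, …, x_r^{n+1}) :_R (x₁⋯x_r)^n)` of a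
sequence `x = x₁, …, x_r` of elements of `R`; the union of the increasing family of ideals
is expressed as a supremum. -/
def limitClosure {R : Type*} [CommRing R] {M : Type*} [AddCommGroup M] [Module R M]
    {r : ℕ} (x : Fin r → R) : Submodule R M :=
  ⨆ n : ℕ, (Ideal.span (Set.range fun i => x i ^ (n + 2)) • (⊤ : Submodule R M)).comap
    (LinearMap.lsmul R M ((∏ i, x i) ^ (n + 1)))

/-- A system of parameters of a Noetherian local ring `R` of dimension `t`: a sequence of `t`
elements of the maximal ideal generating an ideal primary to the maximal ideal. -/
def IsSOP (R : Type*) [CommRing R] [IsLocalRing R] {t : ℕ} (x : Fin t → R) : Prop :=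
  (∀ i, x i ∈ maximalIdeal R) ∧ (Ideal.span (Set.range x)).radical = maximalIdeal R

/-- A ring is catenary if, for any primes `p ≤ q`, all saturated chains of primes from `p`
to `q` have the same length. -/
def IsCatenaryRing (R : Type*) [CommRing R] : Prop :=
  ∀ p q : PrimeSpectrum R, p ≤ q →
    ∀ c₁ c₂ : LTSeries (PrimeSpectrum R),
      c₁.head = p → c₁.last = q → c₂.head = p → c₂.last = q →
      (∀ i : Fin c₁.length, c₁ i.castSucc ⋖ c₁ i.succ) →
      (∀ i : Fin c₂.length, c₂ i.castSucc ⋖ c₂ i.succ) →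
      c₁.length = c₂.length

/-- A ring is equidimensional if `dim R/p = dim R` for every minimal prime `p`. -/
def IsEquidimensionalRing (R : Type*) [CommRing R] : Prop :=
  ∀ p ∈ minimalPrimes R, ringKrullDim (R ⧸ p) = ringKrullDim R

/-! ### Limit closures and determinantal maps -/

section LimitClosure

variable {R : Type*} [CommRing R] {t : ℕ}

/-- The ideal `(x₁ⁿ, …, x_tⁿ)`. -/
def powSpan (x : Fin t → R) (n : ℕ) : Ideal R := Ideal.span (Set.range (x ^ n))

lemma pow_mem_powSpan (x : Fin t → R) (n : ℕ) (i : Fin t) : x i ^ n ∈ powSpan x n :=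
  Ideal.subset_span ⟨i, rfl⟩

lemma powSpan_le {x : Fin t → R} {n : ℕ} {I : Ideal R} : powSpan x n ≤ I ↔ ∀ i, x i ^ n ∈ I := by
  simp [powSpan, Ideal.span_le, Set.range_subset_iff]

lemma powSpan_one (x : Fin t → R) : powSpan x 1 = Ideal.span (Set.range x) := by
  rw [powSpan, pow_one]

lemma powSpan_pow (x : Fin t → R) (m n : ℕ) : powSpan (x ^ m) n = powSpan x (m * n) := by
  rw [powSpan, powSpan, pow_mul]

lemma mem_radical_powSpan (x : Fin t → R) (n : ℕ) (i : Fin t) : x i ∈ (powSpan x n).radical :=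
  ⟨n, pow_mem_powSpan x n i⟩

lemma span_range_le_radical_powSpan (x : Fin t → R) (n : ℕ) :
    Ideal.span (Set.range x) ≤ (powSpan x n).radical :=
  Ideal.span_le.2 (Set.range_subset_iff.2 (mem_radical_powSpan x n))

lemma radical_powSpan (x : Fin t → R) {n : ℕ} (hn : 0 < n) :
    (powSpan x n).radical = (Ideal.span (Set.range x)).radical :=
  le_antisymm
    (Ideal.radical_mono (powSpan_le.2 fun i =>
      Ideal.pow_mem_of_mem _ (Ideal.subset_span (Set.mem_range_self i)) n hn))
    (Ideal.radical_le_radical_iff.2 (span_range_le_radical_powSpan x n))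

lemma mul_mem_of_mem_span {s : Set R} {I : Ideal R} {c a : R} (h : ∀ b ∈ s, c * b ∈ I)
    (ha : a ∈ Ideal.span s) : c * a ∈ I :=
  (Ideal.span_le.2 h : Ideal.span s ≤ Submodule.comap (LinearMap.lsmul R R c) I) ha

lemma prod_pow_mul_mem_powSpan {x : Fin t → R} {n : ℕ} (k : ℕ) {a : R} (h : a ∈ powSpan x n) :
    (∏ i, x i) ^ k * a ∈ powSpan x (n + k) := by
  refine mul_mem_of_mem_span (Set.forall_mem_range.2 fun i => ?_) h
  obtain ⟨c, hc⟩ : x i ∣ ∏ i, x i := Finset.dvd_prod_of_mem _ (Finset.mem_univ i)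
  have hfactor : (∏ i, x i) ^ k * x i ^ n = c ^ k * x i ^ (n + k) := by rw [hc]; ring
  rw [Pi.pow_apply, hfactor]
  exact Ideal.mul_mem_left _ _ (pow_mem_powSpan x _ i)

lemma prod_pow_succ_mul_mem_powSpan {x : Fin t → R} {j n : ℕ} {a : R}
    (h : (∏ i, x i) ^ j * a ∈ powSpan x n) : (∏ i, x i) ^ (j + 1) * a ∈ powSpan x (n + 1) := by
  rw [pow_succ', mul_assoc]
  simpa using prod_pow_mul_mem_powSpan 1 h

lemma mem_limitClosure {x : Fin t → R} {a : R} :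
    a ∈ limitClosure (M := R) x ↔ ∃ j, (∏ i, x i) ^ j * a ∈ powSpan x (j + 1) := by
  have mem_comap : ∀ n b, b ∈ ((Ideal.span (Set.range fun i => x i ^ (n + 2)) •
      (⊤ : Submodule R R)).comap (LinearMap.lsmul R R ((∏ i, x i) ^ (n + 1)))) ↔
      (∏ i, x i) ^ (n + 1) * b ∈ powSpan x (n + 2) := by
    intro n b
    rw [Ideal.smul_top_eq_map, Submodule.mem_comap]
    simp [powSpan, Pi.pow_def]
  rw [limitClosure, Submodule.mem_iSup_of_directed]
  · simp only [mem_comap]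
    exact ⟨fun ⟨j, hj⟩ => ⟨j + 1, hj⟩, fun ⟨j, hj⟩ => ⟨j, prod_pow_succ_mul_mem_powSpan hj⟩⟩
  · refine directed_of_isDirected_le (monotone_nat_of_le_succ fun n b hb => ?_)
    rw [mem_comap] at hb ⊢
    exact prod_pow_succ_mul_mem_powSpan hb

lemma span_range_le_limitClosure (x : Fin t → R) :
    Ideal.span (Set.range x) ≤ limitClosure (M := R) x :=
  fun a ha => mem_limitClosure.2 ⟨0, by simpa [powSpan_one] using ha⟩

lemma mem_limitClosure_of_prod_pow_mul_mem {x : Fin t → R} {m : ℕ} {a : R}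
    (h : (∏ i, x i) ^ m * a ∈ limitClosure (M := R) (x ^ (m + 1))) :
    a ∈ limitClosure (M := R) x := by
  obtain ⟨j, hj⟩ := mem_limitClosure.1 h
  simp only [Pi.pow_apply] at hj
  rw [powSpan_pow, Finset.prod_pow, ← mul_assoc, ← pow_mul, ← pow_add] at hj
  exact mem_limitClosure.2 ⟨(m + 1) * j + m, by convert hj using 2; ring⟩

lemma mulVec_mem_span_range (A : Matrix (Fin t) (Fin t) R) (x : Fin t → R) (i : Fin t) :
    A.mulVec x i ∈ Ideal.span (Set.range x) := by
  rw [Matrix.mulVec, dotProduct]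
  exact Ideal.sum_mem _ fun j _ => Ideal.mul_mem_left _ _ (Ideal.subset_span ⟨j, rfl⟩)

lemma exists_mulVec_eq {x y : Fin t → R} (h : ∀ i, y i ∈ Ideal.span (Set.range x)) :
    ∃ A : Matrix (Fin t) (Fin t) R, A.mulVec x = y := by
  choose c hc using fun i => Ideal.mem_span_range_iff_exists_fun.1 (h i)
  exact ⟨Matrix.of c, funext hc⟩

lemma mem_radical_of_mulVec_eq {x y : Fin t → R} {A : Matrix (Fin t) (Fin t) R} {I : Ideal R}
    (h : A.mulVec x = y) (hx : ∀ i, x i ∈ I.radical) (i : Fin t) : y i ∈ I.radical := by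
  rw [← h]
  exact Ideal.span_le.2 (Set.range_subset_iff.2 hx) (mulVec_mem_span_range A x i)

lemma det_mul_mem_span_range {x y : Fin t → R} {A : Matrix (Fin t) (Fin t) R}
    (h : A.mulVec x = y) {a : R} (ha : a ∈ Ideal.span (Set.range x)) :
    A.det * a ∈ Ideal.span (Set.range y) := by
  refine mul_mem_of_mem_span (Set.forall_mem_range.2 fun i => ?_) ha
  have cramer : A.adjugate.mulVec y = A.det • x := by
    rw [← h, Matrix.mulVec_mulVec, Matrix.adjugate_mul, Matrix.smul_mulVec, Matrix.one_mulVec]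
  simpa [cramer] using mulVec_mem_span_range A.adjugate y i

lemma det_mem_limitClosure_of_mulVec_eq_update_zero {x y : Fin t → R}
    (hy : ∀ i, y i ∈ Ideal.span (Set.range x)) {E : Matrix (Fin t) (Fin t) R} {i : Fin t}
    (h : E.mulVec x = Function.update y i 0) : E.det ∈ limitClosure (M := R) y := by
  refine mem_limitClosure.2 ⟨1, ?_⟩
  have hfactor : (∏ l, y l) ^ 1 * E.det = (∏ l ∈ Finset.univ.erase i, y l) * (E.det * y i) := by
    rw [pow_one, ← Finset.mul_prod_erase _ _ (Finset.mem_univ i)]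
    ring
  rw [hfactor]
  refine mul_mem_of_mem_span (Set.forall_mem_range.2 fun l => ?_)
    (det_mul_mem_span_range h (hy i))
  rcases eq_or_ne l i with rfl | hl
  · simp
  · obtain ⟨c, hc⟩ : y l ∣ ∏ l ∈ Finset.univ.erase i, y l :=
      Finset.dvd_prod_of_mem _ (by simp [hl])
    rw [Function.update_of_ne hl, hc, mul_right_comm, ← sq]
    exact Ideal.mul_mem_right _ _ (pow_mem_powSpan y 2 l)

lemma det_updateRow_sub_det_mem_limitClosure {x y v : Fin t → R} {A : Matrix (Fin t) (Fin t) R}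
    (h : A.mulVec x = y) {i : Fin t} (hv : v ⬝ᵥ x = y i) :
    (A.updateRow i v).det - A.det ∈ limitClosure (M := R) y := by
  have hdet : (A.updateRow i v).det - A.det = (A.updateRow i (v - A i)).det := by
    have := Matrix.det_updateRow_add A i (v - A i) (A i)
    rw [sub_add_cancel, Matrix.updateRow_eq_self] at this
    rw [this, add_sub_cancel_right]
  rw [hdet]
  refine det_mem_limitClosure_of_mulVec_eq_update_zero (x := x) (i := i)
    (fun j => h ▸ mulVec_mem_span_range A x j) (funext fun k => ?_)
  rcases eq_or_ne k i with rfl | hk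
  · have hAk : A k ⬝ᵥ x = y k := congrFun h k
    simp only [Matrix.mulVec, Matrix.updateRow_self, Function.update_self]
    exact (sub_dotProduct v (A k) x).trans (by rw [hv, hAk, sub_self])
  · rw [Function.update_of_ne hk, ← h, Matrix.mulVec, Matrix.updateRow_ne hk]
    rfl

lemma det_sub_det_mem_limitClosure {x y : Fin t → R} {A A' : Matrix (Fin t) (Fin t) R}
    (h : A.mulVec x = y) (h' : A'.mulVec x = y) : A.det - A'.det ∈ limitClosure (M := R) y := by
  -- Pass from `A'` to `A` by exchanging one row at a time.
  let M (s : Finset (Fin t)) : Matrix (Fin t) (Fin t) R := s.piecewise A A'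
  have hM (s) : (M s).mulVec x = y := funext fun i => by
    by_cases hi : i ∈ s
    · exact (congrArg (· ⬝ᵥ x) (s.piecewise_eq_of_mem A A' hi)).trans (congrFun h i)
    · exact (congrArg (· ⬝ᵥ x) (s.piecewise_eq_of_notMem A A' hi)).trans (congrFun h' i)
  suffices hs : ∀ s, (M s).det - A'.det ∈ limitClosure (M := R) y by
    have huniv : M Finset.univ = A := Finset.piecewise_univ A A'
    simpa [huniv] using hs Finset.univ
  intro s
  induction s using Finset.induction_on with
  | empty =>
    have hempty : M ∅ = A' := Finset.piecewise_empty A A'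
    simp [hempty]
  | insert i s _ ih =>
    have hrow : M (insert i s) = (M s).updateRow i (A i) := Finset.piecewise_insert s A A' i
    rw [hrow, ← sub_add_sub_cancel]
    exact add_mem (det_updateRow_sub_det_mem_limitClosure (hM s) (congrFun h i)) ih

lemma det_mul_mem_limitClosure_iff {x y : Fin t → R} {A A' : Matrix (Fin t) (Fin t) R}
    (h : A.mulVec x = y) (h' : A'.mulVec x = y) (r : R) :
    A.det * r ∈ limitClosure (M := R) y ↔ A'.det * r ∈ limitClosure (M := R) y := by
  have := Ideal.mul_mem_right r (limitClosure (M := R) y) (det_sub_det_mem_limitClosure h h')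
  rw [sub_mul] at this
  exact ⟨fun hr => by simpa using sub_mem hr this, fun hr => by simpa using add_mem this hr⟩

lemma exists_forall_pow_succ_mem {y : Fin t → R} {I : Ideal R} (h : ∀ i, y i ∈ I.radical) :
    ∃ N, ∀ i, y i ^ (N + 1) ∈ I := by
  choose n hn using h
  exact ⟨∑ i, n i, fun i => Ideal.pow_mem_of_pow_mem _ (hn i)
    ((Finset.single_le_sum (by simp) (Finset.mem_univ i)).trans (Nat.le_succ _))⟩

lemma diagonal_pow_mulVec_pow (x : Fin t → R) (m n : ℕ) :
    (Matrix.diagonal (x ^ m)).mulVec (x ^ n) = x ^ (m + n) := by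
  funext i; simp [Matrix.mulVec_diagonal, pow_add]

lemma det_mul_mem_limitClosure_of_pow {x y : Fin t → R} {A C : Matrix (Fin t) (Fin t) R} {N : ℕ}
    {r : R} (hA : A.mulVec x = y) (hC : C.mulVec x = y ^ (N + 1))
    (hr : C.det * r ∈ limitClosure (M := R) (y ^ (N + 1))) :
    A.det * r ∈ limitClosure (M := R) y := by
  refine mem_limitClosure_of_prod_pow_mul_mem (m := N) ?_
  have hmul : (Matrix.diagonal (y ^ N) * A).mulVec x = y ^ (N + 1) := by
    rw [← Matrix.mulVec_mulVec, hA]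
    simpa using diagonal_pow_mulVec_pow y N 1
  simpa [Finset.prod_pow, mul_assoc] using (det_mul_mem_limitClosure_iff hmul hC r).2 hr

lemma det_mul_mem_limitClosure {x y : Fin t → R} {A : Matrix (Fin t) (Fin t) R}
    (h : A.mulVec x = y) {r : R} (hr : r ∈ limitClosure (M := R) x) :
    A.det * r ∈ limitClosure (M := R) y := by
  obtain ⟨n, hn⟩ := mem_limitClosure.1 hr
  obtain ⟨N, hN⟩ := exists_forall_pow_succ_mem
    (mem_radical_of_mulVec_eq h (mem_radical_powSpan x (n + 1)))
  obtain ⟨B, hB⟩ := exists_mulVec_eq (y := y ^ (N + 1)) hN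
  refine det_mul_mem_limitClosure_of_pow (N := N) (C := B * Matrix.diagonal (x ^ n)) h ?_ ?_
  · rw [← Matrix.mulVec_mulVec, ← hB]
    simpa using congrArg B.mulVec (diagonal_pow_mulVec_pow x n 1)
  · rw [Matrix.det_mul, Matrix.det_diagonal, mul_assoc]
    refine span_range_le_limitClosure _ (det_mul_mem_span_range hB ?_)
    simpa [Finset.prod_pow, powSpan] using hn

lemma mem_limitClosure_of_det_mul_mem {x y : Fin t → R} {A : Matrix (Fin t) (Fin t) R}
    (h : A.mulVec x = y) (hx : ∀ i, x i ∈ (Ideal.span (Set.range y)).radical) {r : R}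
    (hr : A.det * r ∈ limitClosure (M := R) y) : r ∈ limitClosure (M := R) x := by
  obtain ⟨N, hN⟩ := exists_forall_pow_succ_mem hx
  obtain ⟨B, hB⟩ := exists_mulVec_eq (y := x ^ (N + 1)) hN
  have hBA : (B * A).det * r ∈ limitClosure (M := R) (x ^ (N + 1)) := by
    rw [Matrix.det_mul, mul_assoc]
    exact det_mul_mem_limitClosure hB hr
  simpa using det_mul_mem_limitClosure_of_pow (A := 1) (Matrix.one_mulVec x)
    (by rw [← Matrix.mulVec_mulVec, h, hB]) hBA

lemma prod_mul_mem_limitClosure_iff {x y d : Fin t → R} (h : d * x = y)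
    (hx : ∀ i, x i ∈ (Ideal.span (Set.range y)).radical) {r : R} :
    (∏ i, d i) * r ∈ limitClosure (M := R) y ↔ r ∈ limitClosure (M := R) x := by
  have hd : (Matrix.diagonal d).mulVec x = y := by
    funext i; simp [Matrix.mulVec_diagonal, ← h]
  rw [← Matrix.det_diagonal]
  exact ⟨mem_limitClosure_of_det_mul_mem hd hx, det_mul_mem_limitClosure hd⟩

/-- The determinantal kernel of an ideal `p` at `x`: the elements whose class in `R/(x)^lim` is
killed by every determinantal map to a sequence `y` inside `p`. -/
def detKer (p : Ideal R) (x : Fin t → R) : Ideal R where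
  carrier := {a | ∀ (y : Fin t → R) (B : Matrix (Fin t) (Fin t) R), (∀ i, y i ∈ p) →
    B.mulVec x = y → B.det * a ∈ limitClosure (M := R) y}
  add_mem' := fun ha hb y B hy hB => by
    rw [mul_add]; exact add_mem (ha y B hy hB) (hb y B hy hB)
  zero_mem' := fun y B _ _ => by simp
  smul_mem' := fun c a ha y B hy hB => by
    rw [smul_eq_mul, mul_left_comm]; exact Ideal.mul_mem_left _ _ (ha y B hy hB)

lemma limitClosure_le_detKer (p : Ideal R) (x : Fin t → R) :
    limitClosure (M := R) x ≤ detKer p x := fun _ ha _ _ _ hB => det_mul_mem_limitClosure hB ha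

lemma det_mul_mem_detKer {p : Ideal R} {x x' : Fin t → R} {C : Matrix (Fin t) (Fin t) R}
    (h : C.mulVec x = x') {a : R} (ha : a ∈ detKer p x) : C.det * a ∈ detKer p x' := by
  intro y B hy hB
  rw [← mul_assoc, ← Matrix.det_mul]
  exact ha y _ hy (by rw [← Matrix.mulVec_mulVec, h, hB])

lemma mem_detKer_of_det_mul_mem {p : Ideal R} {x x' : Fin t → R} {C : Matrix (Fin t) (Fin t) R}
    (h : C.mulVec x = x') (hx : ∀ i, x i ∈ (Ideal.span (Set.range x')).radical) {a : R}
    (ha : C.det * a ∈ detKer p x') : a ∈ detKer p x := by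
  intro y B hy hB
  obtain ⟨N, hN⟩ := exists_forall_pow_succ_mem (mem_radical_of_mulVec_eq hB hx)
  obtain ⟨B', hB'⟩ := exists_mulVec_eq (y := y ^ (N + 1)) hN
  refine det_mul_mem_limitClosure_of_pow (N := N) (C := B' * C) hB ?_ ?_
  · rw [← Matrix.mulVec_mulVec, h, hB']
  · rw [Matrix.det_mul, mul_assoc]
    exact ha _ B' (fun i => Ideal.pow_mem_of_mem _ (hy i) _ N.succ_pos) hB'

lemma mem_detKer_cons {r : ℕ} {p : Ideal R} {w v : R} {Z : Fin r → R} {s : ℕ} {a : R}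
    (ha : v ^ s * a ∈ Ideal.span (Set.range Z))
    (hp : p ≤ (Ideal.span (Set.range (Fin.cons (v ^ s * w) Z : Fin (r + 1) → R))).radical) :
    a ∈ detKer p (Fin.cons w Z : Fin (r + 1) → R) := by
  -- Up to powers, a determinantal map to `y` inside `p` factors through multiplication by `v ^ s`.
  intro y B hy hB
  obtain ⟨N, hN⟩ := exists_forall_pow_succ_mem fun i => hp (hy i)
  obtain ⟨B', hB'⟩ := exists_mulVec_eq (y := y ^ (N + 1)) hN
  let D : Matrix (Fin (r + 1)) (Fin (r + 1)) R := Matrix.diagonal (Fin.cons (v ^ s) 1)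
  have hD : D.mulVec (Fin.cons w Z) = Fin.cons (v ^ s * w) Z := by
    funext i; cases i using Fin.cases <;> simp [D, Matrix.mulVec_diagonal]
  refine det_mul_mem_limitClosure_of_pow (N := N) (C := B' * D) hB ?_ ?_
  · rw [← Matrix.mulVec_mulVec, hD, hB']
  · have hdet : D.det = v ^ s := by simp [D, Fin.prod_univ_succ]
    rw [Matrix.det_mul, hdet, mul_assoc]
    refine span_range_le_limitClosure _ (det_mul_mem_span_range hB' (Ideal.span_mono ?_ ha))
    exact Set.range_subset_iff.2 fun i => ⟨i.succ, by simp⟩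

end LimitClosure

/-! ### Lifting classes of the determinantal kernel -/

section Lifting

lemma comp_cons {R S : Type*} {r : ℕ} (f : R → S) (w : R) (Z : Fin r → R) :
    f ∘ (Fin.cons w Z : Fin (r + 1) → R) = Fin.cons (f w) (f ∘ Z) :=
  funext fun i => by cases i using Fin.cases <;> simp

variable {R S : Type*} [CommRing R] [CommRing S] {r : ℕ}

lemma span_range_cons (w : R) (Z : Fin r → R) :
    Ideal.span (Set.range (Fin.cons w Z : Fin (r + 1) → R)) =
      Ideal.span {w} ⊔ Ideal.span (Set.range Z) := by
  rw [Fin.range_cons, Ideal.span_insert]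

lemma span_range_cons_zero (Z : Fin r → R) :
    Ideal.span (Set.range (Fin.cons 0 Z : Fin (r + 1) → R)) = Ideal.span (Set.range Z) := by
  rw [span_range_cons, Ideal.span_singleton_zero, bot_sup_eq]

lemma map_span_range (f : R →+* S) (Z : Fin r → R) :
    (Ideal.span (Set.range Z)).map f = Ideal.span (Set.range (f ∘ Z)) := by
  rw [Ideal.map_span, ← Set.range_comp]

lemma map_mk_span_range_cons (z : R) (Z : Fin r → R) :
    (Ideal.span (Set.range (Fin.cons z Z : Fin (r + 1) → R))).map
      (Ideal.Quotient.mk (Ideal.span {z})) =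
        Ideal.span (Set.range (Ideal.Quotient.mk (Ideal.span {z}) ∘ Z)) := by
  rw [map_span_range, comp_cons,
    Ideal.Quotient.eq_zero_iff_mem.2 (Ideal.mem_span_singleton_self z), span_range_cons_zero]

lemma cons_pow (w : R) (Z : Fin r → R) (n : ℕ) :
    (Fin.cons w Z : Fin (r + 1) → R) ^ n = Fin.cons (w ^ n) (Z ^ n) := by
  funext i; cases i using Fin.cases <;> simp

lemma powSpan_cons (w : R) (Z : Fin r → R) (n : ℕ) :
    powSpan (Fin.cons w Z : Fin (r + 1) → R) n = Ideal.span {w ^ n} ⊔ powSpan Z n := by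
  rw [powSpan, cons_pow, span_range_cons, powSpan]

lemma comp_pow (f : R →+* S) (x : Fin r → R) (n : ℕ) : f ∘ (x ^ n) = (f ∘ x) ^ n :=
  funext fun i => map_pow f (x i) n

lemma map_powSpan (f : R →+* S) (Z : Fin r → R) (n : ℕ) :
    (powSpan Z n).map f = powSpan (f ∘ Z) n := by
  rw [powSpan, map_span_range, comp_pow, powSpan]

lemma map_mem_limitClosure (f : R →+* S) {x : Fin r → R} {a : R}
    (h : a ∈ limitClosure (M := R) x) : f a ∈ limitClosure (M := S) (f ∘ x) := by
  obtain ⟨j, hj⟩ := mem_limitClosure.1 h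
  refine mem_limitClosure.2 ⟨j, ?_⟩
  simpa [map_powSpan] using Ideal.mem_map_of_mem f hj

lemma exists_sub_mul_mem_of_mem_span_singleton_sup {I : Ideal R} {a g : R}
    (h : a ∈ Ideal.span {g} ⊔ I) : ∃ b, a - g * b ∈ I := by
  obtain ⟨b, c, hc, rfl⟩ := Ideal.mem_span_singleton_sup.1 h
  exact ⟨b, by simpa [mul_comm g] using hc⟩

lemma exists_det_eq_and_mulVec_cons (w c : R) (e Z : Fin r → R) :
    ∃ B : Matrix (Fin (r + 1)) (Fin (r + 1)) R, B.det = c ∧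
      B.mulVec (Fin.cons w Z) = Fin.cons (c * w + ∑ i, e i * Z i) Z := by
  let B : Matrix (Fin (r + 1)) (Fin (r + 1)) R :=
    Matrix.of (Fin.cons (Fin.cons c e) fun i => Pi.single i.succ 1)
  refine ⟨B, ?_, ?_⟩
  · have upper : B.IsUpperTriangular := by
      intro i j hij
      obtain ⟨i, rfl⟩ := Fin.exists_succ_eq.2 (Fin.ne_of_gt (lt_of_le_of_lt (Fin.zero_le j) hij))
      exact Pi.single_eq_of_ne (Fin.ne_of_lt hij) _
    rw [Matrix.det_of_isUpperTriangular upper, Fin.prod_univ_succ]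
    simp [B]
  · funext i
    cases i using Fin.cases with
    | zero => simp [B, Matrix.mulVec, dotProduct, Fin.sum_univ_succ]
    | succ i => simp [B, Matrix.mulVec]

lemma mem_limitClosure_cons_iff (w : R) (Z : Fin r → R) {k k' m m' : ℕ} (hk : 0 < k) (hm : 0 < m)
    {a : R} :
    w ^ k' * ((∏ i, Z i) ^ m' * a) ∈
      limitClosure (M := R) (Fin.cons (w ^ (k + k')) (Z ^ (m + m')) : Fin (r + 1) → R) ↔
    a ∈ limitClosure (M := R) (Fin.cons (w ^ k) (Z ^ m) : Fin (r + 1) → R) := by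
  have key := prod_mul_mem_limitClosure_iff (r := a)
    (x := (Fin.cons (w ^ k) (Z ^ m) : Fin (r + 1) → R))
    (y := (Fin.cons (w ^ (k + k')) (Z ^ (m + m')) : Fin (r + 1) → R))
    (d := (Fin.cons (w ^ k') (Z ^ m') : Fin (r + 1) → R)) ?_ ?_
  · rw [← key, Fin.prod_univ_succ]
    simp [Finset.prod_pow, mul_assoc]
  · funext i; cases i using Fin.cases <;> simp [pow_add, mul_comm]
  · intro i
    have hrad (j) := Ideal.le_radical (Ideal.subset_span (Set.mem_range_self
      (f := (Fin.cons (w ^ (k + k')) (Z ^ (m + m')) : Fin (r + 1) → R)) j))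
    cases i using Fin.cases with
    | zero =>
      exact Ideal.pow_mem_of_mem _ (Ideal.mem_radical_of_pow_mem (hrad 0)) _ hk
    | succ i =>
      exact Ideal.pow_mem_of_mem _ (Ideal.mem_radical_of_pow_mem (hrad i.succ)) _ hm

lemma exists_pow_sub_mul_mem_powSpan {w v : R} {Z : Fin r → R}
    (hv : v ∈ (Ideal.span (Set.range (Fin.cons w Z : Fin (r + 1) → R))).radical) {n : ℕ}
    (hn : 0 < n) : ∃ N, 0 < N ∧ ∃ c, v ^ N - w ^ n * c ∈ powSpan Z n := by
  rw [← radical_powSpan _ hn] at hv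
  obtain ⟨N, hN⟩ := hv
  have hN' := Ideal.mul_mem_left _ v hN
  rw [← pow_succ', powSpan_cons] at hN'
  exact ⟨N + 1, N.succ_pos, exists_sub_mul_mem_of_mem_span_singleton_sup hN'⟩

/- A class in the determinantal kernel at `(wⁿ, Zⁿ)` is in particular killed by the map to
`(v^N, Zⁿ)`; clearing denominators in that relation corrects it to a class on which a power of `v`
vanishes modulo `(Z)`. -/
lemma exists_representative_of_mem_detKer {p : Ideal R} {w v : R} {Z : Fin r → R} {n : ℕ}
    (hn : 0 < n) (hZ : ∀ i, Z i ∈ p) (hv : v ∈ p)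
    (hvw : v ∈ (Ideal.span (Set.range (Fin.cons w Z : Fin (r + 1) → R))).radical)
    {a β : R} (ha : a ∈ detKer p ((Fin.cons w Z : Fin (r + 1) → R) ^ n))
    (hβ : β * a ∉ limitClosure (M := R) ((Fin.cons w Z : Fin (r + 1) → R) ^ n)) :
    ∃ n' a' s, 0 < n' ∧ v ^ s * a' ∈ powSpan Z n' ∧
      β * a' ∉ limitClosure (M := R) (Fin.cons (w ^ n) (Z ^ n') : Fin (r + 1) → R) := by
  rw [cons_pow] at ha hβ
  obtain ⟨N, hN, c, hc⟩ := exists_pow_sub_mul_mem_powSpan hvw hn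
  obtain ⟨e, he⟩ := Ideal.mem_span_range_iff_exists_fun.1 hc
  obtain ⟨B, hdet, hB⟩ := exists_det_eq_and_mulVec_cons (w ^ n) c e (Z ^ n)
  rw [he, mul_comm c, add_sub_cancel] at hB
  have killed : B.det * a ∈ limitClosure (M := R) (Fin.cons (v ^ N) (Z ^ n)) :=
    ha _ B (Fin.cases (Ideal.pow_mem_of_mem _ hv _ hN)
      fun i => Ideal.pow_mem_of_mem _ (hZ i) _ hn) hB
  obtain ⟨j, hj⟩ := mem_limitClosure.1 killed
  rw [powSpan_cons, powSpan_pow, hdet, Fin.prod_univ_succ] at hj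
  simp only [Fin.cons_zero, Fin.cons_succ, Pi.pow_apply, Finset.prod_pow] at hj
  obtain ⟨b, hb⟩ := exists_sub_mul_mem_of_mem_span_singleton_sup hj
  set P := ∏ i, Z i
  have hexp : n + n * j = n * (j + 1) := by ring
  refine ⟨n * (j + 1), P ^ (n * j) * a - w ^ n * b, N * (j + 1), by positivity, ?_, ?_⟩
  · have hcP : P ^ (n * j) * (v ^ N - w ^ n * c) ∈ powSpan Z (n * (j + 1)) :=
      hexp ▸ prod_pow_mul_mem_powSpan (n * j) hc
    convert add_mem (Ideal.mul_mem_left _ (v ^ (N * j) * a) hcP) (Ideal.mul_mem_left _ (w ^ n) hb)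
      using 1
    ring
  · intro h
    apply hβ
    rw [← mem_limitClosure_cons_iff w Z (k' := 0) (m' := n * j) hn hn, hexp, add_zero]
    have hwb : w ^ n * (β * b) ∈ limitClosure (M := R)
        (Fin.cons (w ^ n) (Z ^ (n * (j + 1))) : Fin (r + 1) → R) :=
      Ideal.mul_mem_right _ _ (span_range_le_limitClosure _ (Ideal.subset_span ⟨0, rfl⟩))
    convert add_mem h hwb using 1
    ring

lemma exists_pow_mul_sub_mem_powSpan {w v u : R} {c : ℕ} {Z : Fin r → R}
    (hu : u * v ^ c ∈ Ideal.span (Set.range Z))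
    (hw : w ∈ (Ideal.span {u} ⊔ Ideal.span {v} ⊔ Ideal.span (Set.range Z)).radical) (s n : ℕ) :
    ∃ j k b, v ^ k * (w ^ j - v ^ s * b) ∈ powSpan Z n := by
  obtain ⟨M, hM⟩ := span_range_le_radical_powSpan Z n hu
  obtain ⟨j, hj⟩ : w ∈ (Ideal.span {v ^ s} ⊔ (Ideal.span {u ^ M} ⊔ powSpan Z n)).radical := by
    refine Ideal.radical_le_radical_iff.2 (sup_le (sup_le ?_ ?_) ?_) hw
    · rw [Ideal.span_singleton_le_iff_mem]
      exact ⟨M, Ideal.mem_sup_right (Ideal.mem_sup_left (Ideal.mem_span_singleton_self _))⟩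
    · rw [Ideal.span_singleton_le_iff_mem]
      exact ⟨s, Ideal.mem_sup_left (Ideal.mem_span_singleton_self _)⟩
    · exact (span_range_le_radical_powSpan Z n).trans
        (Ideal.radical_mono (le_sup_right.trans le_sup_right))
  obtain ⟨b, hb⟩ := exists_sub_mul_mem_of_mem_span_singleton_sup hj
  obtain ⟨b', hb'⟩ := exists_sub_mul_mem_of_mem_span_singleton_sup hb
  refine ⟨j, c * M, b, ?_⟩
  convert add_mem (Ideal.mul_mem_left _ (v ^ (c * M)) hb') (Ideal.mul_mem_right b' _ hM) using 1
  ring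

lemma exists_lift_representative {f : R →+* S} (hf : Function.Surjective f) {w v u : R} {c : ℕ}
    {Z : Fin r → R} (hu : u * v ^ c ∈ Ideal.span (Set.range Z))
    (hw : w ∈ (Ideal.span {u} ⊔ Ideal.span {v} ⊔ Ideal.span (Set.range Z)).radical)
    {s n : ℕ} {a' : S} (ha : f v ^ s * a' ∈ powSpan (f ∘ Z) n) :
    ∃ a j s', v ^ s' * a ∈ powSpan Z n ∧ f a = f w ^ j * a' := by
  obtain ⟨j, k, b, hb⟩ := exists_pow_mul_sub_mem_powSpan hu hw s n
  obtain ⟨a, rfl⟩ := hf a'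
  rw [← map_powSpan, ← map_pow, ← map_mul, Ideal.mem_map_iff_of_surjective f hf] at ha
  obtain ⟨ζ, hζ, hfζ⟩ := ha
  refine ⟨w ^ j * a - b * (v ^ s * a - ζ), j, s + k, ?_, ?_⟩
  · convert add_mem (Ideal.mul_mem_right (v ^ s * a - ζ) _ hb)
      (Ideal.mul_mem_left _ (v ^ k * w ^ j) hζ) using 1
    ring
  · simp only [map_sub, map_mul, map_pow] at hfζ ⊢
    rw [hfζ]; ring

lemma exists_mem_detKer_pow {p : Ideal R} {x z : Fin r → R} {β : R}
    (hx : ∀ i, x i ∈ (Ideal.span (Set.range z)).radical)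
    (hz : ∀ i, z i ∈ (Ideal.span (Set.range x)).radical)
    {a : R} (ha : a ∈ detKer p x) (hβ : β * a ∉ limitClosure (M := R) x) :
    ∃ n b, 0 < n ∧ b ∈ detKer p (z ^ n) ∧ β * b ∉ limitClosure (M := R) (z ^ n) := by
  obtain ⟨n, hn⟩ := exists_forall_pow_succ_mem hz
  obtain ⟨C, hC⟩ := exists_mulVec_eq (y := z ^ (n + 1)) hn
  refine ⟨n + 1, C.det * a, n.succ_pos, det_mul_mem_detKer hC ha, fun h => hβ ?_⟩
  rw [mul_left_comm] at h
  refine mem_limitClosure_of_det_mul_mem hC (fun i => ?_) h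
  rw [← powSpan, radical_powSpan z n.succ_pos]
  exact hx i

lemma exists_lift_detKer {f : R →+* S} (hf : Function.Surjective f) {p : Ideal S} {w v u : R}
    {c : ℕ} {Z : Fin r → R} (hZ : ∀ i, f (Z i) ∈ p) (hv : f v ∈ p)
    (hvw : v ∈ (Ideal.span (Set.range (Fin.cons w Z : Fin (r + 1) → R))).radical)
    (hu : u * v ^ c ∈ Ideal.span (Set.range Z))
    (hw : w ∈ (Ideal.span {u} ⊔ Ideal.span {v} ⊔ Ideal.span (Set.range Z)).radical)
    {x : Fin (r + 1) → S}
    (hx : ∀ i, x i ∈ ((Ideal.span (Set.range (Fin.cons w Z : Fin (r + 1) → R))).map f).radical)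
    (hx' : ∀ i, f ((Fin.cons w Z : Fin (r + 1) → R) i) ∈ (Ideal.span (Set.range x)).radical)
    {a : S} {β : R} (ha : a ∈ detKer p x) (hβ : f β * a ∉ limitClosure (M := S) x) :
    ∃ N b s, 0 < N ∧ v ^ s * b ∈ powSpan Z N ∧
      β * b ∉ limitClosure (M := R) ((Fin.cons w Z : Fin (r + 1) → R) ^ N) := by
  have hmap : (Ideal.span (Set.range (Fin.cons w Z : Fin (r + 1) → R))).map f =
      Ideal.span (Set.range (Fin.cons (f w) (f ∘ Z) : Fin (r + 1) → S)) := by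
    rw [map_span_range, comp_cons]
  obtain ⟨n, a₁, hn, ha₁, hβ₁⟩ := exists_mem_detKer_pow
    (z := (Fin.cons (f w) (f ∘ Z) : Fin (r + 1) → S)) (by simpa only [hmap] using hx)
    (fun i => by rw [← comp_cons]; exact hx' i) ha hβ
  have hfv : f v ∈ (Ideal.span (Set.range
      (Fin.cons (f w) (f ∘ Z) : Fin (r + 1) → S))).radical :=
    hmap ▸ Ideal.map_radical_le f (Ideal.mem_map_of_mem f hvw)
  obtain ⟨n', a₂, s, hn', hs, hβ₂⟩ :=
    exists_representative_of_mem_detKer (Z := f ∘ Z) hn hZ hv hfv ha₁ hβ₁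
  obtain ⟨b, j, s', hb, hfb⟩ := exists_lift_representative hf hu hw hs
  have hexp : n' + (n + j) = n + j + n' := add_comm _ _
  refine ⟨n + j + n', w ^ n' * ((∏ i, Z i) ^ (n + j) * b), s', by positivity, ?_, fun h => hβ₂ ?_⟩
  · have hPb := prod_pow_mul_mem_powSpan (n + j) hb
    rw [hexp] at hPb
    convert Ideal.mul_mem_left _ (w ^ n') hPb using 1
    ring
  · rw [← mem_limitClosure_cons_iff _ _ (k' := j + n') (m' := n + j) hn hn', hexp, ← add_assoc]
    have hfh := map_mem_limitClosure f h
    rw [comp_pow, comp_cons, cons_pow] at hfh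
    simp only [map_pow, map_mul, map_prod, hfb] at hfh
    convert hfh using 1
    simp only [Function.comp_apply]
    ring

lemma exists_uniform_pow_mul_eq_zero [IsNoetherianRing R] (w : R) :
    ∃ k, ∀ b : R, (∃ N, w ^ N * b = 0) → w ^ k * b = 0 := by
  let annihilated : ℕ →o Submodule R R :=
    ⟨fun n => LinearMap.ker (LinearMap.lsmul R R (w ^ n)), monotone_nat_of_le_succ fun n b hb => by
      simp only [LinearMap.mem_ker, LinearMap.lsmul_apply, smul_eq_mul] at hb ⊢
      rw [pow_succ', mul_assoc, hb, mul_zero]⟩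
  obtain ⟨k, hk⟩ := monotone_stabilizes_iff_noetherian.2 ‹IsNoetherianRing R› annihilated
  refine ⟨k, ?_⟩
  rintro b ⟨N, hN⟩
  have hb : b ∈ annihilated (max k N) :=
    annihilated.monotone (le_max_right k N) (by simpa [annihilated] using hN)
  rw [← hk _ (le_max_left _ _)] at hb
  simpa [annihilated] using hb

lemma exists_notMem_limitClosure_pow [IsNoetherianRing R] [IsLocalRing R] {w : R}
    (hw : w ∈ maximalIdeal R) {a : R} (ha : ∀ N, w ^ N * a ≠ 0) :
    ∃ n, 0 < n ∧ a ∉ limitClosure (M := R) (fun _ : Fin 1 => w ^ n) := by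
  by_contra! hcon
  obtain ⟨k, hk⟩ := exists_uniform_pow_mul_eq_zero w
  refine ha k (Ideal.mem_bot.1 ?_)
  rw [← Ideal.iInf_pow_eq_bot_of_isLocalRing _ (maximalIdeal.isMaximal R).ne_top, Ideal.mem_iInf]
  intro i
  obtain ⟨j, hj⟩ := mem_limitClosure.1 (hcon (i + 1) i.succ_pos)
  simp only [Finset.univ_unique, Finset.prod_const, Finset.card_singleton, pow_one, powSpan,
    Pi.pow_def, Set.range_const, ← pow_mul] at hj
  obtain ⟨b, hb⟩ := Ideal.mem_span_singleton.1 hj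
  have hkill : w ^ k * (a - w ^ (i + 1) * b) = 0 :=
    hk _ ⟨(i + 1) * j, by rw [mul_sub, hb]; ring⟩
  have hfactor : w ^ k * a = w ^ k * w * b * w ^ i := by
    rw [mul_sub, sub_eq_zero] at hkill
    rw [hkill]; ring
  rw [hfactor]
  exact Ideal.mul_mem_left _ _ (Ideal.pow_mem_pow hw i)

end Lifting

/-! ### Melkersson's criterion -/

section Melkersson
variable {R M : Type*} [CommRing R] [AddCommGroup M] [Module R M]

lemma exists_forall_eq_of_antitone₂ {α : Type*} [PartialOrder α] [WellFoundedLT α]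
    {K : ℕ → ℕ → α} (hK : ∀ ⦃i j m n⦄, i ≤ j → m ≤ n → K j n ≤ K i m) :
    ∃ I, ∀ i, I ≤ i → ∀ n, K I n = K i n := by
  obtain ⟨d, hd⟩ := WellFoundedLT.antitone_chain_condition
    (f := fun i => K i i) fun i j hij => hK hij hij
  choose c hc using fun n => WellFoundedLT.antitone_chain_condition
    (f := fun i => K i n) fun i j hij => hK hij le_rfl
  refine ⟨d + ∑ n ∈ Finset.range d, c n, fun i hi n => (hK hi le_rfl).antisymm' ?_⟩
  rcases lt_or_ge n d with hn | hn
  · have hcn : c n ≤ d + ∑ n ∈ Finset.range d, c n :=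
      le_add_left (Finset.single_le_sum_of_canonicallyOrdered (Finset.mem_range.2 hn))
    exact ((hc n _ hcn).symm.trans (hc n i (hcn.trans hi))).le
  · calc K (d + ∑ n ∈ Finset.range d, c n) n ≤ K d d := hK (Nat.le_add_right _ _) hn
      _ = K (max i n) (max i n) := hd _ (hn.trans (le_max_right _ _))
      _ ≤ K i n := hK (le_max_left _ _) (le_max_right _ _)

/-- The submodule `x ^ n • N ∩ (0 :_M x)` of `0 :_M x`. The submodules `N` of an `x`-power torsion
module are compared through these. -/
def torsionLayer (x : R) (N : Submodule R M) (n : ℕ) :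
    Submodule R (LinearMap.ker (LinearMap.lsmul R M x)) :=
  (N.map (LinearMap.lsmul R M (x ^ n))).submoduleOf _

lemma mem_torsionLayer {x : R} {N : Submodule R M} {n : ℕ}
    {a : LinearMap.ker (LinearMap.lsmul R M x)} :
    a ∈ torsionLayer x N n ↔ ∃ b ∈ N, x ^ n • b = (a : M) := Iff.rfl

lemma torsionLayer_anti (x : R) {N N' : Submodule R M} (hN : N' ≤ N) {m n : ℕ} (hmn : m ≤ n) :
    torsionLayer x N' n ≤ torsionLayer x N m := by
  rintro a ⟨b, hb, hba⟩
  refine mem_torsionLayer.2 ⟨x ^ (n - m) • b, N.smul_mem _ (hN hb), ?_⟩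
  rw [smul_smul, ← pow_add, Nat.add_sub_cancel' hmn]
  exact hba

lemma le_of_torsionLayer_le {x : R} (hx : ∀ a : M, ∃ k, x ^ k • a = 0) {N N' : Submodule R M}
    (hN : N' ≤ N) (h : ∀ n, torsionLayer x N n ≤ torsionLayer x N' n) : N ≤ N' := by
  have of_pow_smul_eq_zero : ∀ k, ∀ a ∈ N, x ^ k • a = 0 → a ∈ N' := by
    intro k
    induction k with
    | zero =>
      intro a _ ha
      rw [pow_zero, one_smul] at ha
      exact ha ▸ N'.zero_mem
    | succ k ih =>
      intro a ha hxa
      have hker : x • x ^ k • a = 0 := by rw [smul_smul, ← pow_succ', hxa]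
      obtain ⟨b, hb, hba⟩ := mem_torsionLayer.1 (h k (show ⟨x ^ k • a, hker⟩ ∈ _ from ⟨a, ha, rfl⟩))
      have hab : a - b ∈ N' := ih _ (sub_mem ha (hN hb)) (by rw [smul_sub, hba, sub_self])
      simpa using add_mem hab hb
  intro a ha
  obtain ⟨k, hk⟩ := hx a
  exact of_pow_smul_eq_zero k a ha hk

theorem isArtinian_of_isArtinian_ker_lsmul {x : R} (hx : ∀ a : M, ∃ k, x ^ k • a = 0)
    [IsArtinian R (LinearMap.ker (LinearMap.lsmul R M x))] : IsArtinian R M := by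
  rw [← monotone_stabilizes_iff_artinian]
  intro f
  obtain ⟨I, hI⟩ := exists_forall_eq_of_antitone₂ (K := fun i => torsionLayer x (f i).ofDual)
    fun i j m n hij hmn => torsionLayer_anti x (f.monotone hij) hmn
  exact ⟨I, fun i hi => le_antisymm (α := (Submodule R M)ᵒᵈ) (f.monotone hi)
    (le_of_torsionLayer_le hx (f.monotone hi) fun n => (hI i hi n).le)⟩

lemma isArtinian_of_ker_le_ker {N P : Type*} [AddCommGroup N] [AddCommGroup P] [Module R N]
    [Module R P] [IsArtinian R N] (f : M →ₗ[R] N) (g : M →ₗ[R] P)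
    (h : LinearMap.ker f ≤ LinearMap.ker g) (hg : Function.Surjective g) : IsArtinian R P := by
  have : IsArtinian R (M ⧸ LinearMap.ker f) :=
    isArtinian_of_injective (Submodule.liftQ _ f le_rfl)
      (LinearMap.ker_eq_bot.1 (Submodule.ker_liftQ_eq_bot _ _ _ le_rfl))
  exact isArtinian_of_surjective _ (Submodule.liftQ _ g h)
    (Function.Surjective.of_comp (g := Submodule.mkQ _) (by rwa [← LinearMap.coe_comp,
      Submodule.liftQ_mkQ]))

end Melkersson

/-! ### Localization at the powers of an element -/

section LocAway
universe u
variable {R : Type u} [CommRing R] (x : R)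

/-- The localization `M_x`. -/
abbrev LocAway (M : Type u) [AddCommGroup M] [Module R M] : Type u :=
  LocalizedModule (Submonoid.powers x) M

variable {M N P : Type u} [AddCommGroup M] [Module R M] [AddCommGroup N] [Module R N]
  [AddCommGroup P] [Module R P]

variable (M) in
/-- The canonical map `M → M_x`. -/
noncomputable abbrev toLocAway : M →ₗ[R] LocAway x M :=
  LocalizedModule.mkLinearMap (Submonoid.powers x) M

/-- The map `M_x → N_x` induced by `M → N`. -/
noncomputable def locAwayMap : (M →ₗ[R] N) →ₗ[R] LocAway x M →ₗ[R] LocAway x N :=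
  IsLocalizedModule.map (Submonoid.powers x) (toLocAway x M) (toLocAway x N)

lemma locAwayMap_toLocAway (f : M →ₗ[R] N) (a : M) :
    locAwayMap x f (toLocAway x M a) = toLocAway x N (f a) :=
  IsLocalizedModule.map_apply _ _ _ _ _

lemma exists_pow_smul_eq_toLocAway (b : LocAway x M) :
    ∃ (k : ℕ) (a : M), x ^ k • b = toLocAway x M a := by
  obtain ⟨⟨a, _, k, rfl⟩, h⟩ := IsLocalizedModule.surj (Submonoid.powers x) (toLocAway x M) b
  exact ⟨k, a, h⟩

lemma toLocAway_eq_zero_iff {x : R} {a : M} : toLocAway x M a = 0 ↔ ∃ k : ℕ, x ^ k • a = 0 := by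
  rw [IsLocalizedModule.eq_zero_iff (Submonoid.powers x)]
  exact ⟨fun ⟨⟨_, k, hk⟩, h⟩ => ⟨k, by subst hk; exact h⟩, fun ⟨k, h⟩ => ⟨⟨_, k, rfl⟩, h⟩⟩

lemma pow_smul_bijective (k : ℕ) : Function.Bijective fun b : LocAway x M => x ^ k • b :=
  (Module.End.isUnit_iff _).1
    (IsLocalizedModule.map_units (toLocAway x M) (⟨x ^ k, k, rfl⟩ : Submonoid.powers x))

lemma locAwayMap_comp (g : N →ₗ[R] P) (f : M →ₗ[R] N) :
    locAwayMap x (g ∘ₗ f) = locAwayMap x g ∘ₗ locAwayMap x f :=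
  IsLocalizedModule.map_comp' _ _ _ _ f g

lemma locAwayMap_lsmul (y : R) :
    locAwayMap x (LinearMap.lsmul R M y) = LinearMap.lsmul R (LocAway x M) y := by
  have : LinearMap.lsmul R M y = y • LinearMap.id := rfl
  rw [this, map_smul, locAwayMap, IsLocalizedModule.map_id]
  rfl

lemma locAwayMap_injective {f : M →ₗ[R] N} (hf : Function.Injective f) :
    Function.Injective (locAwayMap x f) := IsLocalizedModule.map_injective _ _ _ _ hf

lemma locAwayMap_surjective {f : M →ₗ[R] N} (hf : Function.Surjective f) :
    Function.Surjective (locAwayMap x f) := IsLocalizedModule.map_surjective _ _ _ _ hf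

lemma locAwayMap_exact {f : M →ₗ[R] N} {g : N →ₗ[R] P} (h : Function.Exact f g) :
    Function.Exact (locAwayMap x f) (locAwayMap x g) := IsLocalizedModule.map_exact _ _ _ _ _ _ h

lemma subsingleton_locAway {x : R} (h : ∀ a : M, ∃ k : ℕ, x ^ k • a = 0) :
    Subsingleton (LocAway x M) := by
  rw [LocalizedModule.subsingleton_iff]
  exact fun a => let ⟨k, hk⟩ := h a; ⟨x ^ k, ⟨k, rfl⟩, hk⟩

end LocAway

/-! ### Čech cohomology through differential modules -/

section DiffModule
universe u
variable {R : Type u} [CommRing R]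

variable (R) in
/-- A module with an endomorphism `d` such that `d² = 0`. Čech complexes are encoded as ungraded
differential modules, so that all cohomology modules are treated at once. -/
structure DiffModule where
  /-- The underlying type. -/
  carrier : Type u
  [addCommGroup : AddCommGroup carrier]
  [module : Module R carrier]
  /-- The differential. -/
  d : carrier →ₗ[R] carrier
  d_d : ∀ a, d (d a) = 0

namespace DiffModule

attribute [instance] addCommGroup module

instance : CoeSort (DiffModule R) (Type u) := ⟨carrier⟩

variable {X Y Z : DiffModule R}

/-- The cohomology `ker d / im d`. -/
abbrev Cohomology (X : DiffModule R) : Type u :=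
  LinearMap.ker X.d ⧸ (LinearMap.range X.d).submoduleOf (LinearMap.ker X.d)

/-- The class of a cocycle. -/
abbrev toCohomology (X : DiffModule R) : LinearMap.ker X.d →ₗ[R] X.Cohomology := Submodule.mkQ _

lemma toCohomology_eq_zero_iff {a : LinearMap.ker X.d} :
    X.toCohomology a = 0 ↔ ∃ b, X.d b = a := by
  rw [Submodule.mkQ_apply, Submodule.Quotient.mk_eq_zero]
  exact Iff.rfl

lemma toCohomology_surjective (X : DiffModule R) : Function.Surjective X.toCohomology :=
  Submodule.mkQ_surjective _

/-- The map induced on cohomology. -/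
noncomputable def cohomologyMap (f : X →ₗ[R] Y) (hf : ∀ a, f (X.d a) = Y.d (f a)) :
    X.Cohomology →ₗ[R] Y.Cohomology :=
  Submodule.mapQ _ _
    (f.restrict (p := LinearMap.ker X.d) (q := LinearMap.ker Y.d) fun a ha => by
      rw [LinearMap.mem_ker] at ha ⊢
      rw [← hf, ha, map_zero])
    (by
      rintro ⟨_, _⟩ ⟨b, rfl⟩
      exact ⟨f b, (hf b).symm⟩)

lemma cohomologyMap_toCohomology_eq_zero_iff {f : X →ₗ[R] Y} {hf : ∀ a, f (X.d a) = Y.d (f a)}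
    {a : LinearMap.ker X.d} :
    cohomologyMap f hf (X.toCohomology a) = 0 ↔ ∃ b, Y.d b = f a :=
  toCohomology_eq_zero_iff

/-- Short exact sequences `0 → X → Y → Z → 0` of differential modules. -/
structure IsShortExact (f : X →ₗ[R] Y) (g : Y →ₗ[R] Z) : Prop where
  map_d_left : ∀ a, f (X.d a) = Y.d (f a)
  map_d_right : ∀ a, g (Y.d a) = Z.d (g a)
  injective : Function.Injective f
  surjective : Function.Surjective g
  exact : Function.Exact f g

namespace IsShortExact
variable {f : X →ₗ[R] Y} {g : Y →ₗ[R] Z}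

lemma exists_sub_d_eq (h : IsShortExact f g) {b : Y} (hb : ∃ c, Z.d c = g b) :
    ∃ a c, f a = b - Y.d c := by
  obtain ⟨c, hc⟩ := hb
  obtain ⟨c, rfl⟩ := h.surjective c
  obtain ⟨a, ha⟩ := (h.exact (b - Y.d c)).1 (by rw [map_sub, h.map_d_right, hc, sub_self])
  exact ⟨a, c, ha⟩

lemma range_cohomologyMap_eq_ker (h : IsShortExact f g) :
    LinearMap.range (cohomologyMap f h.map_d_left) =
      LinearMap.ker (cohomologyMap g h.map_d_right) := by
  refine le_antisymm ?_ fun b hb => ?_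
  · rintro _ ⟨a, rfl⟩
    obtain ⟨a, rfl⟩ := X.toCohomology_surjective a
    refine cohomologyMap_toCohomology_eq_zero_iff.2 ⟨0, ?_⟩
    rw [map_zero]
    exact (h.exact.apply_apply_eq_zero a.1).symm
  · obtain ⟨⟨b, hdb⟩, rfl⟩ := Y.toCohomology_surjective b
    obtain ⟨a, c, hac⟩ := h.exists_sub_d_eq (cohomologyMap_toCohomology_eq_zero_iff.1 hb)
    have hda : X.d a = 0 := h.injective <| by
      rw [h.map_d_left, hac, map_sub, Y.d_d, LinearMap.mem_ker.1 hdb, map_zero, sub_zero]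
    refine ⟨X.toCohomology ⟨a, hda⟩, (Submodule.Quotient.eq _).2 ⟨-c, ?_⟩⟩
    change Y.d (-c) = f a - b
    rw [hac, map_neg]
    abel

theorem isArtinian_cohomology (h : IsShortExact f g) [IsArtinian R X.Cohomology]
    [IsArtinian R Z.Cohomology] : IsArtinian R Y.Cohomology :=
  isArtinian_of_range_eq_ker _ _ h.range_cohomologyMap_eq_ker

/-- The pairs `(b, a)` with `d b = f a`. They present the connecting homomorphism: the class of
`g b` is sent to the class of `a`. -/
def connectingPairs (f : X →ₗ[R] Y) : Submodule R (Y × X) :=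
  LinearMap.ker (Y.d ∘ₗ LinearMap.fst R Y X - f ∘ₗ LinearMap.snd R Y X)

lemma d_eq_of_connectingPairs (w : connectingPairs f) : Y.d w.1.1 = f w.1.2 := sub_eq_zero.1 w.2

/-- The class of `g b` for a pair `(b, a)` with `d b = f a`. -/
noncomputable def connectingSource (h : IsShortExact f g) :
    connectingPairs f →ₗ[R] Z.Cohomology :=
  Z.toCohomology ∘ₗ LinearMap.codRestrict (LinearMap.ker Z.d)
    (g ∘ₗ LinearMap.fst _ _ _ ∘ₗ Submodule.subtype _) fun w => by
      change Z.d (g w.1.1) = 0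
      rw [← h.map_d_right, d_eq_of_connectingPairs, h.exact.apply_apply_eq_zero]

/-- The class of `a` for a pair `(b, a)` with `d b = f a`; it is killed by `H(f)`. -/
noncomputable def connectingTarget (h : IsShortExact f g) :
    connectingPairs f →ₗ[R] LinearMap.ker (cohomologyMap f h.map_d_left) :=
  LinearMap.codRestrict _
    (X.toCohomology ∘ₗ LinearMap.codRestrict (LinearMap.ker X.d)
      (LinearMap.snd _ _ _ ∘ₗ Submodule.subtype _) fun w => h.injective <| by
        change f (X.d w.1.2) = f 0
        rw [h.map_d_left, ← d_eq_of_connectingPairs, Y.d_d, map_zero])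
    fun w => cohomologyMap_toCohomology_eq_zero_iff.2 ⟨w.1.1, d_eq_of_connectingPairs w⟩

theorem isArtinian_ker_cohomologyMap (h : IsShortExact f g) [IsArtinian R Z.Cohomology] :
    IsArtinian R (LinearMap.ker (cohomologyMap f h.map_d_left)) := by
  refine isArtinian_of_ker_le_ker h.connectingSource h.connectingTarget (fun w hw => ?_) ?_
  · obtain ⟨a, c, hac⟩ := h.exists_sub_d_eq (toCohomology_eq_zero_iff.1 (LinearMap.mem_ker.1 hw))
    refine LinearMap.mem_ker.2 (Subtype.ext (toCohomology_eq_zero_iff.2 ⟨a, h.injective ?_⟩))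
    rw [h.map_d_left, hac, map_sub, Y.d_d, sub_zero]
    exact d_eq_of_connectingPairs w
  · rintro ⟨a, ha⟩
    obtain ⟨a, rfl⟩ := X.toCohomology_surjective a
    obtain ⟨b, hb⟩ := cohomologyMap_toCohomology_eq_zero_iff.1 (LinearMap.mem_ker.1 ha)
    exact ⟨⟨(b, a), sub_eq_zero.2 hb⟩, Subtype.ext rfl⟩

end IsShortExact

/-- The cone of `X → X_x`. -/
noncomputable def cone (x : R) (X : DiffModule R) : DiffModule R where
  carrier := X × LocAway x X
  d := LinearMap.prod (X.d ∘ₗ LinearMap.fst _ _ _)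
    (toLocAway x _ ∘ₗ LinearMap.fst _ _ _ - locAwayMap x X.d ∘ₗ LinearMap.snd _ _ _)
  d_d := by
    rintro ⟨a, b⟩
    have hd : locAwayMap x X.d (locAwayMap x X.d b) = 0 := by
      rw [← LinearMap.comp_apply, ← locAwayMap_comp, LinearMap.ext (f := X.d ∘ₗ X.d) (g := 0) X.d_d,
        map_zero, LinearMap.zero_apply]
    refine Prod.ext (X.d_d a) ?_
    change toLocAway x X (X.d a) - locAwayMap x X.d (toLocAway x X a - locAwayMap x X.d b) = 0
    rw [map_sub, locAwayMap_toLocAway, hd, sub_zero, sub_self]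

lemma cone_d_eq_iff {x : R} {a a' : X} {b b' : LocAway x X} :
    (cone x X).d (a, b) = (a', b') ↔
      X.d a = a' ∧ toLocAway x X a - locAwayMap x X.d b = b' := Prod.ext_iff

lemma cone_d_eq_zero_iff {x : R} {a : X} {b : LocAway x X} :
    (cone x X).d (a, b) = 0 ↔ X.d a = 0 ∧ locAwayMap x X.d b = toLocAway x X a := by
  rw [← sub_eq_zero (a := locAwayMap x X.d b), ← neg_sub, neg_eq_zero]
  exact cone_d_eq_iff

/-- The Čech differential module of a list of elements, as an iterated cone. -/
noncomputable def cech (l : List R) (X : DiffModule R) : DiffModule R := l.foldr cone X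

/-- The map induced on cones. -/
noncomputable def coneMap (x : R) (f : X →ₗ[R] Y) : cone x X →ₗ[R] cone x Y :=
  LinearMap.prodMap f (locAwayMap x f)

/-- The map induced on Čech differential modules. -/
noncomputable def cechMap : (l : List R) → (X →ₗ[R] Y) → (cech l X →ₗ[R] cech l Y)
  | [], f => f
  | x :: l, f => coneMap x (cechMap l f)

lemma coneMap_d (x : R) {f : X →ₗ[R] Y} (hf : ∀ a, f (X.d a) = Y.d (f a)) (a : cone x X) :
    coneMap x f ((cone x X).d a) = (cone x Y).d (coneMap x f a) := by
  obtain ⟨a, b⟩ := a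
  have hd : locAwayMap x f (locAwayMap x X.d b) = locAwayMap x Y.d (locAwayMap x f b) := by
    rw [← LinearMap.comp_apply, ← locAwayMap_comp, LinearMap.ext (f := f ∘ₗ X.d) (g := Y.d ∘ₗ f) hf,
      locAwayMap_comp, LinearMap.comp_apply]
  refine Prod.ext (hf a) ?_
  change locAwayMap x f (toLocAway x X a - locAwayMap x X.d b) =
    toLocAway x Y (f a) - locAwayMap x Y.d (locAwayMap x f b)
  rw [map_sub, locAwayMap_toLocAway, hd]

lemma exact_prodMap {A B C A' B' C' : Type*} [Zero C] [Zero C'] {f : A → B} {g : B → C}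
    {f' : A' → B'} {g' : B' → C'} (h : Function.Exact f g) (h' : Function.Exact f' g') :
    Function.Exact (Prod.map f f') (Prod.map g g') := by
  rintro ⟨b, b'⟩
  rw [Set.range_prodMap, Set.prodMk_mem_set_prod_eq, ← h b, ← h' b']
  exact Prod.mk_eq_zero

namespace IsShortExact
variable {f : X →ₗ[R] Y} {g : Y →ₗ[R] Z}

lemma cone (x : R) (h : IsShortExact f g) : IsShortExact (coneMap x f) (coneMap x g) where
  map_d_left := coneMap_d x h.map_d_left
  map_d_right := coneMap_d x h.map_d_right
  injective := h.injective.prodMap (locAwayMap_injective x h.injective)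
  surjective := h.surjective.prodMap (locAwayMap_surjective x h.surjective)
  exact := exact_prodMap h.exact (locAwayMap_exact x h.exact)

lemma cech (h : IsShortExact f g) : ∀ l : List R, IsShortExact (cechMap l f) (cechMap l g)
  | [] => h
  | x :: l => (h.cech l).cone x

end IsShortExact

lemma cechMap_lsmul (l : List R) (X : DiffModule R) (y : R) :
    cechMap l (LinearMap.lsmul R X y) = LinearMap.lsmul R (cech l X) y := by
  induction l with
  | nil => rfl
  | cons x l ih =>
    change coneMap x (cechMap l (LinearMap.lsmul R X y)) = _
    rw [ih, coneMap, locAwayMap_lsmul]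
    rfl

end DiffModule
end DiffModule

/-! ### Artinianness of Čech cohomology -/

section ArtinianCech
universe u
variable {R : Type u} [CommRing R]

namespace DiffModule

/-- Every cohomology class of `X` is killed by a power of `y`. -/
def HasPowTorsionCohomology (X : DiffModule R) (y : R) : Prop :=
  ∀ a, X.d a = 0 → ∃ (k : ℕ) (b : X), X.d b = y ^ k • a

lemma hasPowTorsionCohomology_cone_self (x : R) (X : DiffModule R) :
    HasPowTorsionCohomology (cone x X) x := by
  rintro ⟨a, b⟩ hab
  obtain ⟨-, hb⟩ := cone_d_eq_zero_iff.1 hab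
  obtain ⟨k, c, hc⟩ := exists_pow_smul_eq_toLocAway x b
  obtain ⟨j, hj⟩ : ∃ j : ℕ, x ^ j • (x ^ k • a - X.d c) = 0 := by
    rw [← toLocAway_eq_zero_iff, map_sub, map_smul, ← locAwayMap_toLocAway, ← hc, map_smul, hb,
      sub_self]
  rw [smul_sub, sub_eq_zero] at hj
  refine ⟨j + k, (x ^ j • c, 0), cone_d_eq_iff.2 ⟨?_, ?_⟩⟩
  · rw [map_smul, ← hj, smul_smul, pow_add]
  · rw [map_zero, sub_zero, map_smul, ← hc, smul_smul, pow_add]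

lemma exists_locAwayMap_d_eq (x : R) {y : R} {X : DiffModule R} (hX : HasPowTorsionCohomology X y)
    {b : LocAway x X} (hb : locAwayMap x X.d b = 0) :
    ∃ (k : ℕ) (c : LocAway x X), locAwayMap x X.d c = y ^ k • b := by
  obtain ⟨j, a, ha⟩ := exists_pow_smul_eq_toLocAway x b
  obtain ⟨i, hi⟩ : ∃ i : ℕ, x ^ i • X.d a = 0 := by
    rw [← toLocAway_eq_zero_iff, ← locAwayMap_toLocAway, ← ha, map_smul, hb, smul_zero]
  obtain ⟨k, e, he⟩ := hX (x ^ i • a) (by rw [map_smul, hi])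
  obtain ⟨c, hc : x ^ (i + j) • c = toLocAway x X e⟩ :=
    (pow_smul_bijective x (i + j)).2 (toLocAway x X e)
  refine ⟨k, c, (pow_smul_bijective x (i + j)).1 ?_⟩
  change x ^ (i + j) • locAwayMap x X.d c = x ^ (i + j) • y ^ k • b
  rw [← map_smul, hc, locAwayMap_toLocAway, he, map_smul, map_smul, ← ha, smul_comm, pow_add,
    mul_smul, smul_comm (y ^ k) (x ^ j)]

lemma HasPowTorsionCohomology.cone (x : R) {y : R} {X : DiffModule R}
    (hX : HasPowTorsionCohomology X y) : HasPowTorsionCohomology (cone x X) y := by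
  rintro ⟨a, b⟩ hab
  obtain ⟨ha, hb⟩ := cone_d_eq_zero_iff.1 hab
  obtain ⟨k, α, hα⟩ := hX a ha
  have hcocycle : locAwayMap x X.d (toLocAway x X α - y ^ k • b) = 0 := by
    rw [map_sub, map_smul, locAwayMap_toLocAway, hα, map_smul, hb, sub_self]
  obtain ⟨m, β, hβ⟩ := exists_locAwayMap_d_eq x hX hcocycle
  refine ⟨m + k, (y ^ m • α, β), cone_d_eq_iff.2 ⟨?_, ?_⟩⟩
  · rw [map_smul, hα, smul_smul, pow_add]
  · rw [hβ, map_smul, smul_sub, smul_smul, ← pow_add, sub_sub_cancel]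

lemma hasPowTorsionCohomology_cech {l : List R} {y : R} (hy : y ∈ l) (X : DiffModule R) :
    HasPowTorsionCohomology (cech l X) y := by
  induction l with
  | nil => simp at hy
  | cons x l ih =>
    rcases List.mem_cons.1 hy with rfl | hy
    · exact hasPowTorsionCohomology_cone_self _ _
    · exact (ih hy).cone _

lemma hasPowTorsionCohomology_of_mem_radical {X : DiffModule R} {s : Set R}
    (hs : ∀ y ∈ s, HasPowTorsionCohomology X y) {y : R} (hy : y ∈ (Ideal.span s).radical) :
    HasPowTorsionCohomology X y := by
  intro a ha
  let I : Ideal R := (LinearMap.range X.d).comap (LinearMap.toSpanSingleton R _ a)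
  have hsI : Ideal.span s ≤ I.radical := Ideal.span_le.2 fun y hy => hs y hy a ha
  exact Ideal.radical_le_radical_iff.2 hsI hy

theorem isArtinian_cohomology_of_isShortExact_lsmul {X Z : DiffModule R} {y : R} {g : X →ₗ[R] Z}
    (h : IsShortExact (LinearMap.lsmul R X y) g) (hX : HasPowTorsionCohomology X y)
    [IsArtinian R Z.Cohomology] : IsArtinian R X.Cohomology := by
  have hmul : cohomologyMap _ h.map_d_left = LinearMap.lsmul R X.Cohomology y :=
    LinearMap.ext fun a => by
      obtain ⟨a, rfl⟩ := X.toCohomology_surjective a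
      rfl
  have : IsArtinian R (LinearMap.ker (LinearMap.lsmul R X.Cohomology y)) :=
    hmul ▸ h.isArtinian_ker_cohomologyMap
  refine isArtinian_of_isArtinian_ker_lsmul (x := y) fun a => ?_
  obtain ⟨a, rfl⟩ := X.toCohomology_surjective a
  obtain ⟨k, b, hb⟩ := hX a a.2
  exact ⟨k, toCohomology_eq_zero_iff.2 ⟨b, hb⟩⟩

lemma exists_injective_cech (l : List R) (X : DiffModule R)
    (h : ∀ x ∈ l, ∀ a : X, ∃ k : ℕ, x ^ k • a = 0) :
    ∃ f : cech l X →ₗ[R] X, Function.Injective f := by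
  induction l with
  | nil => exact ⟨LinearMap.id, Function.injective_id⟩
  | cons x l ih =>
    obtain ⟨f, hf⟩ := ih fun y hy => h y (List.mem_cons_of_mem x hy)
    have hsub : Subsingleton (LocAway x (cech l X)) := subsingleton_locAway fun a => by
      obtain ⟨k, hk⟩ := h x List.mem_cons_self (f a)
      exact ⟨k, hf (by rw [map_smul, hk, map_zero])⟩
    exact ⟨f ∘ₗ LinearMap.fst R (cech l X) (LocAway x (cech l X)),
      hf.comp fun a b hab => Prod.ext hab (hsub.elim _ _)⟩

lemma isArtinian_cech_of_torsion (l : List R) (X : DiffModule R) [IsArtinian R X]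
    (h : ∀ x ∈ l, ∀ a : X, ∃ k : ℕ, x ^ k • a = 0) : IsArtinian R (cech l X).Cohomology := by
  obtain ⟨f, hf⟩ := exists_injective_cech l X h
  have := isArtinian_of_injective f hf
  infer_instance

variable (R) in
/-- A module as a differential module with zero differential. -/
def ofModule (M : Type u) [AddCommGroup M] [Module R M] : DiffModule R := ⟨M, 0, fun _ => rfl⟩

lemma isShortExact_ofModule {M N P : Type u} [AddCommGroup M] [Module R M] [AddCommGroup N]
    [Module R N] [AddCommGroup P] [Module R P] {f : M →ₗ[R] N} {g : N →ₗ[R] P}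
    (hf : Function.Injective f) (hg : Function.Surjective g) (hfg : Function.Exact f g) :
    IsShortExact (X := ofModule R M) (Y := ofModule R N) (Z := ofModule R P) f g :=
  ⟨fun _ => map_zero f, fun _ => map_zero g, hf, hg, hfg⟩

end DiffModule

lemma exists_mem_maximalIdeal_of_forall_exists_mul_notMem [IsNoetherianRing R] [IsLocalRing R]
    {N : Ideal R} (h : ∀ a ∉ N, ∃ x ∈ maximalIdeal R, x * a ∉ N) :
    ∃ x ∈ maximalIdeal R, ∀ a, x * a ∈ N → a ∈ N := by
  by_contra! hcon
  have smul_mk_eq_zero_iff (x a : R) : x • Ideal.Quotient.mk N a = 0 ↔ x * a ∈ N :=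
    Ideal.Quotient.eq_zero_iff_mem
  have hcover : (maximalIdeal R : Set R) ⊆
      ⋃ p ∈ (associatedPrimes.finite R (R ⧸ N)).toFinset, (p : Set R) := by
    intro x hx
    obtain ⟨a, ha, ha'⟩ := hcon x hx
    have hzero : x ∈ {r : R | ∃ b : R ⧸ N, b ≠ 0 ∧ r • b = 0} :=
      ⟨Ideal.Quotient.mk N a, mt Ideal.Quotient.eq_zero_iff_mem.1 ha',
        (smul_mk_eq_zero_iff x a).2 ha⟩
    rw [← biUnion_associatedPrimes_eq_zero_divisors] at hzero
    simpa using hzero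
  obtain ⟨p, hp, hmp⟩ := (Ideal.subset_union_prime (f := id) ⊤ ⊤ (fun p hp _ _ =>
    ((Set.Finite.mem_toFinset _).1 hp).isPrime)).1 hcover
  obtain ⟨hprime, a, ha⟩ := isAssociatedPrime_iff.1 ((Set.Finite.mem_toFinset _).1 hp)
  obtain ⟨a, rfl⟩ := Ideal.Quotient.mk_surjective a
  have mem_p_iff (x : R) : x ∈ p ↔ x * a ∈ N := by
    rw [ha, Submodule.mem_colon_singleton, Submodule.mem_bot, smul_mk_eq_zero_iff]
  have haN : a ∉ N := fun haN =>
    hprime.ne_top ((Ideal.eq_top_iff_one p).2 ((mem_p_iff 1).2 (by rwa [one_mul])))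
  obtain ⟨x, hx, hxa⟩ := h a haN
  exact hxa ((mem_p_iff x).1 (hmp hx))

lemma exact_quotient_of_mul_mem_iff {J N : Ideal R} {a : R} {f : (R ⧸ J) →ₗ[R] R ⧸ N}
    (hf : ∀ c, f (Submodule.mkQ J c) = Submodule.mkQ N (c * a)) :
    Function.Exact f (Submodule.factor (le_sup_left (a := N) (b := Ideal.span {a}))) := by
  intro c
  obtain ⟨c, rfl⟩ := Submodule.mkQ_surjective _ c
  change Submodule.mkQ (N ⊔ Ideal.span {a}) c = 0 ↔ _
  rw [Submodule.mkQ_apply, Submodule.Quotient.mk_eq_zero]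
  constructor
  · intro hc
    obtain ⟨n, hn, b, hb, rfl⟩ := Submodule.mem_sup.1 hc
    obtain ⟨d, rfl⟩ := Ideal.mem_span_singleton'.1 hb
    refine ⟨Submodule.mkQ _ d, (hf d).trans ?_⟩
    exact (Submodule.Quotient.eq N).2 (by simpa using hn)
  · rintro ⟨d, hd⟩
    obtain ⟨d, rfl⟩ := Submodule.mkQ_surjective _ d
    rw [hf] at hd
    have hdc : d * a - c ∈ N := (Submodule.Quotient.eq N).1 hd
    have := sub_mem (Ideal.mem_sup_right (Ideal.mul_mem_left _ d (Ideal.mem_span_singleton_self a)))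
      (Ideal.mem_sup_left (T := Ideal.span {a}) hdc)
    rwa [sub_sub_cancel] at this

namespace DiffModule

lemma isShortExact_quotient {J N : Ideal R} {a : R} {f : (R ⧸ J) →ₗ[R] R ⧸ N}
    (hf : ∀ c, f (Submodule.mkQ J c) = Submodule.mkQ N (c * a)) (ha : ∀ c, c * a ∈ N → c ∈ J) :
    IsShortExact (X := ofModule R (R ⧸ J)) (Y := ofModule R (R ⧸ N))
      (Z := ofModule R (R ⧸ (N ⊔ Ideal.span {a}))) f (Submodule.factor le_sup_left) := by
  refine isShortExact_ofModule ((injective_iff_map_eq_zero f).2 fun c hc => ?_)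
    (Submodule.factor_surjective le_sup_left) (exact_quotient_of_mul_mem_iff hf)
  obtain ⟨c, rfl⟩ := Submodule.mkQ_surjective _ c
  rw [hf] at hc
  exact (Submodule.Quotient.mk_eq_zero _).2 (ha c ((Submodule.Quotient.mk_eq_zero _).1 hc))

variable [IsLocalRing R] {l : List R}

lemma isArtinian_cech_residue (hl : ∀ y ∈ l, y ∈ maximalIdeal R) :
    IsArtinian R (cech l (ofModule R (R ⧸ maximalIdeal R))).Cohomology := by
  have : IsSimpleModule R (R ⧸ maximalIdeal R) :=
    isSimpleModule_iff_isCoatom.2 (maximalIdeal.isMaximal R).out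
  have : IsArtinian R (ofModule R (R ⧸ maximalIdeal R)) :=
    inferInstanceAs (IsArtinian R (R ⧸ maximalIdeal R))
  refine isArtinian_cech_of_torsion l _ fun x hx c => ⟨1, ?_⟩
  obtain ⟨c, rfl⟩ := Submodule.mkQ_surjective (maximalIdeal R) c
  rw [pow_one]
  exact (Submodule.Quotient.mk_eq_zero _).2 (Ideal.mul_mem_right _ _ (hl x hx))

/- Noetherian induction on `N`: one kills either a socle element of `R/N` or a nonzerodivisor. -/
theorem isArtinian_cech_quotient [IsNoetherianRing R] (hl : ∀ y ∈ l, y ∈ maximalIdeal R)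
    (hm : maximalIdeal R ≤ (Ideal.span {y | y ∈ l}).radical) (N : Ideal R) :
    IsArtinian R (cech l (ofModule R (R ⧸ N))).Cohomology := by
  induction N using IsNoetherian.induction with
  | hgt N ih =>
  by_cases hN : N = ⊤
  · have : Subsingleton (ofModule R (R ⧸ N)) := Ideal.Quotient.subsingleton_iff.2 hN
    exact isArtinian_cech_of_torsion l _ fun _ _ _ => ⟨0, Subsingleton.elim _ _⟩
  by_cases hsocle : ∃ a, a ∉ N ∧ ∀ x ∈ maximalIdeal R, x * a ∈ N
  · obtain ⟨a, haN, ha⟩ := hsocle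
    have hexact := isShortExact_quotient (J := maximalIdeal R) (N := N) (a := a)
      (f := Submodule.mapQ _ _ (LinearMap.toSpanSingleton R R a) ha) (fun c => rfl) fun c hc => by
        by_contra hcm
        exact haN ((Ideal.unit_mul_mem_iff_mem N (notMem_maximalIdeal.1 hcm)).1 hc)
    have := isArtinian_cech_residue hl
    have := ih (N ⊔ Ideal.span {a})
      (left_lt_sup.2 fun h => haN (h (Ideal.mem_span_singleton_self a)))
    exact (hexact.cech l).isArtinian_cohomology
  · push Not at hsocle
    obtain ⟨x, hx, hreg⟩ := exists_mem_maximalIdeal_of_forall_exists_mul_notMem hsocle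
    have hexact := isShortExact_quotient (J := N) (N := N) (a := x)
      (f := LinearMap.lsmul R (R ⧸ N) x) (fun c => congrArg _ (mul_comm x c)) fun c hc =>
        hreg c (by rwa [mul_comm])
    have hxN : x ∉ N := fun h =>
      hN ((Ideal.eq_top_iff_one N).2 (hreg 1 (by rwa [mul_one])))
    have := ih (N ⊔ Ideal.span {x})
      (left_lt_sup.2 fun h => hxN (h (Ideal.mem_span_singleton_self x)))
    have hcech := hexact.cech l
    rw [show LinearMap.lsmul R (R ⧸ N) x = LinearMap.lsmul R (ofModule R (R ⧸ N)) x from rfl,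
      cechMap_lsmul] at hcech
    exact isArtinian_cohomology_of_isShortExact_lsmul hcech
      (hasPowTorsionCohomology_of_mem_radical (fun y hy => hasPowTorsionCohomology_cech hy _)
        (hm hx))

end DiffModule
end ArtinianCech

/-! ### Top local cohomology -/

section TopCohomology
universe u
variable {R : Type u} [CommRing R]

/-- The submodule of elements killed by a power of `z`. -/
abbrev powTorsion (z : R) (M : Type*) [AddCommGroup M] [Module R M] : Submodule R M :=
  Submodule.torsion' R M (Submonoid.powers z)

lemma mem_powTorsion {z : R} {M : Type*} [AddCommGroup M] [Module R M] {θ : M} :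
    θ ∈ powTorsion z M ↔ ∃ k : ℕ, z ^ k • θ = 0 := by
  rw [Submodule.mem_torsion'_iff]
  exact ⟨fun ⟨⟨_, k, hk⟩, h⟩ => ⟨k, by subst hk; exact h⟩, fun ⟨k, h⟩ => ⟨⟨_, k, rfl⟩, h⟩⟩

/-- A model of the top local cohomology module `colim R / (g₁ⁿ, …, g_tⁿ)`, with transition maps
given by multiplication by `g₁ ⋯ g_t`: every element is a generalized fraction
`frac n a = [a / (g₁ ⋯ g_t)ⁿ]`. -/
structure FracModel {t : ℕ} (g : Fin t → R) where
  /-- The underlying type. -/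
  carrier : Type u
  [addCommGroup : AddCommGroup carrier]
  [module : Module R carrier]
  /-- The generalized fraction `[a / (g₁ ⋯ g_t)ⁿ]`. -/
  frac : ℕ → R →ₗ[R] carrier
  exists_frac_eq : ∀ θ, ∃ n a, frac n a = θ
  frac_eq_frac_succ : ∀ n a, frac n a = frac (n + 1) ((∏ i, g i) * a)
  frac_eq_zero_iff : ∀ n a, frac n a = 0 ↔ ∃ j, (∏ i, g i) ^ j * a ∈ powSpan g (n + j)

namespace FracModel

attribute [instance] addCommGroup module

variable {t : ℕ} {g : Fin t → R}

instance : CoeSort (FracModel g) (Type u) := ⟨carrier⟩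

variable (F : FracModel g)

lemma frac_eq_frac_add (n j : ℕ) (a : R) : F.frac n a = F.frac (n + j) ((∏ i, g i) ^ j * a) := by
  induction j with
  | zero => simp
  | succ j ih => rw [ih, F.frac_eq_frac_succ, ← mul_assoc, ← pow_succ', add_assoc]

lemma exists_forall_exists_frac_eq (θ : F) : ∃ m, ∀ n, m ≤ n → ∃ a, F.frac n a = θ := by
  obtain ⟨m, a, rfl⟩ := F.exists_frac_eq θ
  refine ⟨m, fun n hn => ?_⟩
  obtain ⟨j, rfl⟩ := Nat.exists_eq_add_of_le hn
  exact ⟨_, (F.frac_eq_frac_add m j a).symm⟩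

variable (x : R)

lemma toLocAway_frac_sub_eq_zero_iff (n : ℕ) (a : R) :
    (∃ θ : F, toLocAway x F (F.frac n a - x ^ n • θ) = 0) ↔
      ∃ j, (x * ∏ i, g i) ^ j * a ∈ powSpan (Fin.cons x g : Fin (t + 1) → R) (n + j) := by
  simp only [toLocAway_eq_zero_iff, powSpan_cons]
  constructor
  · rintro ⟨θ, k, hk⟩
    obtain ⟨j, hj⟩ := F.exists_forall_exists_frac_eq θ
    obtain ⟨c, rfl⟩ := hj (n + j) (Nat.le_add_left _ _)
    rw [F.frac_eq_frac_add n j, ← map_smul, ← map_sub, ← map_smul, F.frac_eq_zero_iff] at hk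
    obtain ⟨i, hi⟩ := hk
    have hmem := prod_pow_mul_mem_powSpan k hi
    rw [show n + j + i + k = n + (k + i + j) by ring] at hmem
    refine ⟨k + i + j, ?_⟩
    have hsplit : (x * ∏ i, g i) ^ (k + i + j) * a =
        ((∏ i, g i) ^ (k + i) * c) * x ^ (n + (k + i + j)) +
        x ^ (i + j) * ((∏ i, g i) ^ k * ((∏ i, g i) ^ i *
          (x ^ k • ((∏ i, g i) ^ j * a - x ^ n • c)))) := by
      simp only [smul_eq_mul]; ring
    rw [hsplit]
    exact Submodule.add_mem_sup (Ideal.mul_mem_left _ _ (Ideal.mem_span_singleton_self _))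
      (Ideal.mul_mem_left _ _ hmem)
  · rintro ⟨j, hj⟩
    obtain ⟨c, hc⟩ := exists_sub_mul_mem_of_mem_span_singleton_sup hj
    refine ⟨F.frac (n + j) c, j, ?_⟩
    rw [F.frac_eq_frac_add n j, ← map_smul, ← map_sub, ← map_smul, F.frac_eq_zero_iff]
    refine ⟨0, ?_⟩
    rw [add_zero]
    convert hc using 1
    simp only [smul_eq_mul]; ring

lemma pow_smul_divBy (n : ℕ) {M : Type u} [AddCommGroup M] [Module R M] (b : LocAway x M) :
    x ^ n • LocalizedModule.divBy (⟨x ^ n, n, rfl⟩ : Submonoid.powers x) b = b :=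
  LocalizedModule.mul_by_divBy (⟨x ^ n, n, rfl⟩ : Submonoid.powers x) b

lemma divBy_eq_iff {n : ℕ} {M : Type u} [AddCommGroup M] [Module R M] {b c : LocAway x M} :
    LocalizedModule.divBy (⟨x ^ n, n, rfl⟩ : Submonoid.powers x) b = c ↔ b = x ^ n • c := by
  rw [← (pow_smul_bijective x n (M := M)).1.eq_iff]
  simp only [pow_smul_divBy]

/-- The model `F_x / F` of the top local cohomology of `(x, g₁, …, g_t)`. -/
noncomputable def cons : FracModel (Fin.cons x g : Fin (t + 1) → R) where
  carrier := LocAway x F ⧸ LinearMap.range (toLocAway x F)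
  frac n := Submodule.mkQ _ ∘ₗ LocalizedModule.divBy (⟨x ^ n, n, rfl⟩ : Submonoid.powers x) ∘ₗ
    toLocAway x F ∘ₗ F.frac n
  exists_frac_eq θ := by
    obtain ⟨b, rfl⟩ := Submodule.mkQ_surjective _ θ
    obtain ⟨k, θ, hθ⟩ := exists_pow_smul_eq_toLocAway x b
    obtain ⟨m, a, rfl⟩ := F.exists_frac_eq θ
    refine ⟨m + k, (∏ i, g i) ^ k * (x ^ m • a), ?_⟩
    simp only [LinearMap.comp_apply]
    refine congrArg (Submodule.mkQ _) ((divBy_eq_iff x).2 ?_)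
    rw [← F.frac_eq_frac_add, map_smul, map_smul, ← hθ, smul_smul, pow_add]
  frac_eq_frac_succ n a := by
    simp only [LinearMap.comp_apply, Fin.prod_univ_succ, Fin.cons_zero, Fin.cons_succ]
    refine congrArg (Submodule.mkQ _) ((divBy_eq_iff x).2 ?_)
    rw [F.frac_eq_frac_succ, mul_assoc, ← smul_eq_mul x, map_smul, map_smul, map_smul, smul_smul,
      ← pow_succ, pow_smul_divBy]
  frac_eq_zero_iff n a := by
    simp only [Fin.prod_univ_succ, Fin.cons_zero, Fin.cons_succ]
    rw [← F.toLocAway_frac_sub_eq_zero_iff]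
    simp only [LinearMap.comp_apply, Submodule.mkQ_apply, Submodule.Quotient.mk_eq_zero,
      LinearMap.mem_range, map_sub, map_smul, sub_eq_zero, ← divBy_eq_iff]
    exact exists_congr fun θ => eq_comm

/-- The model `R` of the top local cohomology of the empty sequence. -/
noncomputable def nil (g : Fin 0 → R) : FracModel g where
  carrier := R ⧸ (⊥ : Ideal R)
  frac _ := Submodule.mkQ _
  exists_frac_eq θ := ⟨0, Submodule.mkQ_surjective _ θ⟩
  frac_eq_frac_succ _ a := by simp
  frac_eq_zero_iff _ a := by
    rw [Submodule.mkQ_apply, Submodule.Quotient.mk_eq_zero]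
    simp [powSpan]

end FracModel

/-- An augmentation `X → T` of a differential module exhibiting `T` as the image of a module `W` of
cocycles, modulo coboundaries. -/
structure Augmentation (X : DiffModule R) (T : Type u) [AddCommGroup T] [Module R T] where
  /-- The augmentation. -/
  τ : X →ₗ[R] T
  /-- The module of cocycles of top degree. -/
  W : Submodule R X
  τ_d : ∀ a, τ (X.d a) = 0
  d_eq_zero : ∀ w ∈ W, X.d w = 0
  exists_τ_eq : ∀ θ, ∃ w ∈ W, τ w = θ
  exists_d_eq : ∀ w ∈ W, τ w = 0 → ∃ c, X.d c = w

lemma mem_localized₀_powers_iff {x : R} {M : Type u} [AddCommGroup M] [Module R M]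
    {N : Submodule R M} {b : LocAway x M} :
    b ∈ N.localized₀ (Submonoid.powers x) (toLocAway x M) ↔
      ∃ k : ℕ, ∃ w ∈ N, x ^ k • b = toLocAway x M w := by
  simp only [Submodule.mem_localized₀, IsLocalizedModule.mk'_eq_iff]
  constructor
  · rintro ⟨w, hw, ⟨_, k, rfl⟩, h⟩
    exact ⟨k, w, hw, h.symm⟩
  · rintro ⟨k, w, hw, h⟩
    exact ⟨w, hw, ⟨_, k, rfl⟩, h.symm⟩

namespace Augmentation

open DiffModule (cone cone_d_eq_iff cone_d_eq_zero_iff)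

variable {X : DiffModule R} {T : Type u} [AddCommGroup T] [Module R T] (A : Augmentation X T)

lemma locAwayMap_τ_d (x : R) (b : LocAway x X) : locAwayMap x A.τ (locAwayMap x X.d b) = 0 := by
  have hτd : A.τ ∘ₗ X.d = 0 := LinearMap.ext A.τ_d
  rw [← LinearMap.comp_apply, ← locAwayMap_comp, hτd, map_zero, LinearMap.zero_apply]

lemma exists_cone_d_eq (x : R) {b : LocAway x X} {k : ℕ} {w : X} (hw : w ∈ A.W)
    (hb : x ^ k • b = toLocAway x X w)
    (hτ : locAwayMap x A.τ b ∈ LinearMap.range (toLocAway x T)) :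
    ∃ c, (cone x X).d c = ((0, b) : X × LocAway x X) := by
  obtain ⟨θ, hθ⟩ := hτ
  obtain ⟨w₀, hw₀, rfl⟩ := A.exists_τ_eq θ
  obtain ⟨j, hj⟩ : ∃ j : ℕ, x ^ j • A.τ (w - x ^ k • w₀) = 0 := by
    rw [← toLocAway_eq_zero_iff, ← locAwayMap_toLocAway, map_sub, ← hb, map_smul, ← smul_sub,
      map_smul, map_sub, locAwayMap_toLocAway, ← hθ, sub_self, smul_zero]
  rw [← map_smul] at hj
  obtain ⟨c, hc⟩ := A.exists_d_eq _ (A.W.smul_mem _ (sub_mem hw (A.W.smul_mem _ hw₀))) hj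
  obtain ⟨e, he : x ^ (j + k) • e = toLocAway x X c⟩ :=
    (pow_smul_bijective x (j + k)).2 (toLocAway x X c)
  refine ⟨(w₀, -e), cone_d_eq_iff.2 ⟨A.d_eq_zero w₀ hw₀, ?_⟩⟩
  rw [map_neg, sub_neg_eq_add, ← eq_sub_iff_add_eq']
  refine (pow_smul_bijective x (j + k)).1 ?_
  change x ^ (j + k) • locAwayMap x X.d e = x ^ (j + k) • (b - toLocAway x X w₀)
  rw [← map_smul, he, locAwayMap_toLocAway, hc, map_smul, map_sub, map_smul, ← hb, ← smul_sub,
    smul_smul, ← pow_add]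

/-- The augmentation of the cone of `X → X_x` onto `T_x / T`. -/
noncomputable def cone (x : R) :
    Augmentation (DiffModule.cone x X) (LocAway x T ⧸ LinearMap.range (toLocAway x T)) where
  τ := Submodule.mkQ _ ∘ₗ locAwayMap x A.τ ∘ₗ LinearMap.snd R X (LocAway x X)
  W := Submodule.prod ⊥ (A.W.localized₀ (Submonoid.powers x) (toLocAway x X))
  τ_d := by
    rintro ⟨a, b⟩
    change Submodule.mkQ _ (locAwayMap x A.τ (toLocAway x X a - locAwayMap x X.d b)) = 0
    rw [map_sub, locAwayMap_toLocAway, A.locAwayMap_τ_d, sub_zero, Submodule.mkQ_apply,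
      Submodule.Quotient.mk_eq_zero]
    exact ⟨_, rfl⟩
  d_eq_zero := by
    rintro ⟨_, b⟩ ⟨rfl, hb⟩
    obtain ⟨k, w, hw, hb⟩ := mem_localized₀_powers_iff.1 hb
    refine cone_d_eq_zero_iff.2 ⟨map_zero _, (pow_smul_bijective x k).1 ?_⟩
    change x ^ k • locAwayMap x X.d b = x ^ k • toLocAway x X 0
    rw [← map_smul, hb, locAwayMap_toLocAway, A.d_eq_zero w hw, map_zero, smul_zero]
  exists_τ_eq θ := by
    obtain ⟨c, rfl⟩ := Submodule.mkQ_surjective _ θ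
    obtain ⟨k, θ, hθ⟩ := exists_pow_smul_eq_toLocAway x c
    obtain ⟨w, hw, rfl⟩ := A.exists_τ_eq θ
    obtain ⟨b, hb : x ^ k • b = toLocAway x X w⟩ := (pow_smul_bijective x k).2 (toLocAway x X w)
    refine ⟨(0, b), ⟨rfl, mem_localized₀_powers_iff.2 ⟨k, w, hw, hb⟩⟩,
      congrArg (Submodule.mkQ _) ((pow_smul_bijective x k).1 ?_)⟩
    change x ^ k • locAwayMap x A.τ b = x ^ k • c
    rw [← map_smul, hb, locAwayMap_toLocAway, hθ]
  exists_d_eq := by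
    rintro ⟨_, b⟩ ⟨rfl, hb⟩ hτ
    obtain ⟨k, w, hw, hb⟩ := mem_localized₀_powers_iff.1 hb
    exact A.exists_cone_d_eq x hw hb ((Submodule.Quotient.mk_eq_zero _).1 hτ)

lemma isArtinian_powTorsion (A : Augmentation X T) (z : R)
    [IsArtinian R (DiffModule.cone z X).Cohomology] :
    IsArtinian R (powTorsion z T) := by
  let φ : LinearMap.ker (DiffModule.cone z X).d →ₗ[R] powTorsion z T :=
    LinearMap.codRestrict _ (A.τ ∘ₗ LinearMap.fst R X (LocAway z X) ∘ₗ
      Submodule.subtype (LinearMap.ker (DiffModule.cone z X).d)) (by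
        rintro ⟨⟨a, b⟩, hab⟩
        change A.τ a ∈ powTorsion z T
        rw [mem_powTorsion, ← toLocAway_eq_zero_iff, ← locAwayMap_toLocAway,
          ← (cone_d_eq_zero_iff.1 hab).2, A.locAwayMap_τ_d])
  refine isArtinian_of_ker_le_ker (DiffModule.cone z X).toCohomology φ ?_ ?_
  · rintro ⟨⟨a, b⟩, hab⟩ h
    obtain ⟨⟨a', b'⟩, h'⟩ := DiffModule.toCohomology_eq_zero_iff.1 (LinearMap.mem_ker.1 h)
    refine LinearMap.mem_ker.2 (Subtype.ext ?_)
    change A.τ a = 0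
    rw [← (cone_d_eq_iff.1 h').1, A.τ_d]
  · rintro ⟨θ, hθ⟩
    obtain ⟨k, hk⟩ := mem_powTorsion.1 hθ
    obtain ⟨w, hw, rfl⟩ := A.exists_τ_eq θ
    rw [← map_smul] at hk
    obtain ⟨c, hc⟩ := A.exists_d_eq _ (A.W.smul_mem _ hw) hk
    obtain ⟨b, hb : z ^ k • b = toLocAway z X c⟩ := (pow_smul_bijective z k).2 (toLocAway z X c)
    refine ⟨⟨(w, b), cone_d_eq_zero_iff.2 ⟨A.d_eq_zero w hw, ?_⟩⟩, rfl⟩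
    refine (pow_smul_bijective z k).1 ?_
    change z ^ k • locAwayMap z X.d b = z ^ k • toLocAway z X w
    rw [← map_smul, ← map_smul, hb, locAwayMap_toLocAway, hc]

end Augmentation

lemma exists_fracModel_nonempty_augmentation {t : ℕ} (g : Fin t → R) :
    ∃ F : FracModel g, Nonempty (Augmentation
      (DiffModule.cech (List.ofFn g) (DiffModule.ofModule R (R ⧸ (⊥ : Ideal R)))) F) := by
  induction g using Fin.consInduction with
  | elim0 =>
    exact ⟨FracModel.nil _, ⟨{
      τ := LinearMap.id (R := R) (M := R ⧸ (⊥ : Ideal R))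
      W := ⊤
      τ_d := fun _ => rfl
      d_eq_zero := fun _ _ => rfl
      exists_τ_eq := fun θ => ⟨θ, trivial, rfl⟩
      exists_d_eq := fun _ _ h => ⟨0, h.symm⟩ }⟩⟩
  | cons x g ih =>
    obtain ⟨F, ⟨A⟩⟩ := ih
    rw [List.ofFn_cons]
    exact ⟨F.cons x, ⟨A.cone x⟩⟩

lemma exists_fracModel_isArtinian_powTorsion [IsNoetherianRing R] [IsLocalRing R] {t : ℕ}
    {g : Fin t → R} {z : R} (hg : ∀ i, g i ∈ maximalIdeal R) (hz : z ∈ maximalIdeal R)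
    (hm : maximalIdeal R ≤ (Ideal.span (Set.range (Fin.cons z g : Fin (t + 1) → R))).radical) :
    ∃ F : FracModel g, IsArtinian R (powTorsion z F) := by
  obtain ⟨F, ⟨A⟩⟩ := exists_fracModel_nonempty_augmentation g
  have hl : {y | y ∈ z :: List.ofFn g} = Set.range (Fin.cons z g : Fin (t + 1) → R) := by
    ext y
    simp [List.mem_ofFn, Fin.range_cons]
  have : IsArtinian R (DiffModule.cone z (DiffModule.cech (List.ofFn g)
      (DiffModule.ofModule R (R ⧸ (⊥ : Ideal R))))).Cohomology :=
    DiffModule.isArtinian_cech_quotient (l := z :: List.ofFn g)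
      (by simpa [List.mem_ofFn] using ⟨hz, hg⟩) (by rwa [hl]) ⊥
  exact ⟨F, A.isArtinian_powTorsion z⟩

end TopCohomology

/-! ### Generic elements of a prime ideal -/

section Generic
universe u
variable {R : Type u} [CommRing R]

/-- `P z` holds for a generic element `z` of `p`, that is, for all `z ∈ p` outside finitely many
primes not containing `p`. -/
def ForGeneric (p : Ideal R) (P : R → Prop) : Prop :=
  ∃ S : Set (Ideal R), S.Finite ∧ (∀ q ∈ S, q.IsPrime ∧ ¬p ≤ q) ∧ ∀ z ∈ p, (∀ q ∈ S, z ∉ q) → P z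

namespace ForGeneric

variable {p : Ideal R} {P Q : R → Prop}

lemma mono (hP : ForGeneric p P) (h : ∀ z ∈ p, P z → Q z) : ForGeneric p Q := by
  obtain ⟨S, hS, hSp, hSP⟩ := hP
  exact ⟨S, hS, hSp, fun z hz hzS => h z hz (hSP z hz hzS)⟩

lemma and (hP : ForGeneric p P) (hQ : ForGeneric p Q) : ForGeneric p fun z => P z ∧ Q z := by
  obtain ⟨S, hS, hSp, hSP⟩ := hP
  obtain ⟨T, hT, hTp, hTQ⟩ := hQ
  refine ⟨S ∪ T, hS.union hT, fun q hq => hq.elim (hSp q) (hTp q), fun z hz hzST => ?_⟩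
  exact ⟨hSP z hz fun q hq => hzST q (Or.inl hq), hTQ z hz fun q hq => hzST q (Or.inr hq)⟩

lemma exists_mem (h : ForGeneric p P) : ∃ z ∈ p, P z := by
  obtain ⟨S, hS, hSp, hSP⟩ := h
  by_contra! hcon
  have hcover : (p : Set R) ⊆ ⋃ q ∈ (hS.toFinset : Set (Ideal R)), ((id q : Ideal R) : Set R) := by
    intro z hz
    by_contra! hzS
    simp only [Set.mem_iUnion, not_exists, Set.Finite.coe_toFinset] at hzS
    exact hcon z hz (hSP z hz hzS)
  obtain ⟨q, hq, hpq⟩ := (Ideal.subset_union_prime (f := id) ⊤ ⊤ fun q hq _ _ =>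
    (hSp q (hS.mem_toFinset.1 hq)).1).1 hcover
  exact (hSp q (hS.mem_toFinset.1 hq)).2 hpq

end ForGeneric

variable {p : Ideal R}

lemma forGeneric_of_forall {P : R → Prop} (h : ∀ z ∈ p, P z) : ForGeneric p P :=
  ⟨∅, Set.finite_empty, by simp, fun z hz _ => h z hz⟩

lemma forGeneric_notMem {q : Ideal R} (hq : q.IsPrime) (hpq : ¬p ≤ q) :
    ForGeneric p fun z => z ∉ q :=
  ⟨{q}, Set.finite_singleton q, by rintro _ rfl; exact ⟨hq, hpq⟩, fun _ _ h => h q rfl⟩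

lemma forGeneric_notMem_minimalPrimes [IsNoetherianRing R] (p I : Ideal R) :
    ForGeneric p fun z => ∀ q ∈ I.minimalPrimes, ¬p ≤ q → z ∉ q :=
  ⟨{q ∈ I.minimalPrimes | ¬p ≤ q},
    (Ideal.finite_minimalPrimes_of_isNoetherianRing R I).subset (Set.sep_subset _ _),
    fun _ hq => ⟨hq.1.1.1, hq.2⟩, fun _ _ h q hq hpq => h q ⟨hq, hpq⟩⟩

variable {L : Type*} [AddCommGroup L] [Module R L]

/-- Some power `p ^ e` maps `N` into `z ^ s N` for a generic `z ∈ p` and all `s`. -/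
def HasGenericDivisibility (p : Ideal R) (N : Submodule R L) : Prop :=
  ∃ e : ℕ, ForGeneric p fun z =>
    ∀ (s : ℕ), ∀ c ∈ p ^ e, ∀ θ ∈ N, ∃ θ' ∈ N, c • θ = z ^ s • θ'

lemma hasGenericDivisibility_bot : HasGenericDivisibility p (⊥ : Submodule R L) :=
  ⟨0, forGeneric_of_forall fun z _ s c _ θ hθ =>
    ⟨0, zero_mem _, by rw [(Submodule.mem_bot R).1 hθ, smul_zero, smul_zero]⟩⟩

lemma HasGenericDivisibility.sup {N₁ N₂ : Submodule R L} (h₁ : HasGenericDivisibility p N₁)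
    (h₂ : HasGenericDivisibility p N₂) : HasGenericDivisibility p (N₁ ⊔ N₂) := by
  obtain ⟨e₁, h₁⟩ := h₁
  obtain ⟨e₂, h₂⟩ := h₂
  refine ⟨max e₁ e₂, (h₁.and h₂).mono fun z _ ⟨hz₁, hz₂⟩ s c hc θ hθ => ?_⟩
  obtain ⟨a, ha, b, hb, rfl⟩ := Submodule.mem_sup.1 hθ
  obtain ⟨a', ha', haa'⟩ := hz₁ s c (Ideal.pow_le_pow_right (le_max_left _ _) hc) a ha
  obtain ⟨b', hb', hbb'⟩ := hz₂ s c (Ideal.pow_le_pow_right (le_max_right _ _) hc) b hb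
  exact ⟨a' + b', Submodule.add_mem_sup ha' hb', by rw [smul_add, smul_add, haa', hbb']⟩

section SupIrred

variable {N : Submodule R L}

lemma surjective_smul_or_exists_pow_smul_eq_zero [IsArtinian R L] (hN : SupIrred N) (x : R) :
    (Function.Surjective fun θ : N => x • θ) ∨ ∃ n : ℕ, ∀ θ : N, x ^ n • θ = 0 := by
  obtain ⟨n, hn⟩ := Filter.eventually_atTop.1
    (LinearMap.eventually_codisjoint_ker_pow_range_pow (Algebra.lsmul R R N x))
  have hsup := congrArg (Submodule.map N.subtype) (hn (n + 1) n.le_succ).eq_top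
  rw [← map_pow, Submodule.map_sup, Submodule.map_subtype_top] at hsup
  have hmap : ∀ {K : Submodule R N}, K.map N.subtype = N → K = ⊤ := fun {K} hK =>
    Submodule.map_injective_of_injective N.injective_subtype
      (hK.trans (Submodule.map_subtype_top N).symm)
  rcases hN.2 hsup with hker | hrange
  · exact Or.inr ⟨n + 1, fun θ => LinearMap.mem_ker.1 ((hmap hker).symm ▸ Submodule.mem_top)⟩
  · refine Or.inl fun θ => ?_
    obtain ⟨η, hη⟩ := LinearMap.range_eq_top.1 (hmap hrange) θ
    refine ⟨x ^ n • η, ?_⟩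
    rw [← hη, pow_succ', map_mul]
    rfl

lemma surjective_pow_smul {x : R} (hx : Function.Surjective fun θ : N => x • θ) (s : ℕ) :
    Function.Surjective fun θ : N => x ^ s • θ := by
  convert hx.iterate s using 1
  exact (smul_iterate x s).symm

lemma mem_radical_annihilator_iff {x : R} :
    x ∈ N.annihilator.radical ↔ ∃ n : ℕ, ∀ θ : N, x ^ n • θ = 0 := by
  simp only [Ideal.mem_radical_iff, Submodule.mem_annihilator, Subtype.forall, SetLike.mk_smul_mk,
    Submodule.mk_eq_zero]

lemma isPrime_radical_annihilator [IsArtinian R L] (hN : SupIrred N) :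
    N.annihilator.radical.IsPrime := by
  have hne : ¬∀ θ : N, θ = 0 := fun h =>
    hN.1 fun K _ θ hθ => by rw [show θ = 0 from congrArg Subtype.val (h ⟨θ, hθ⟩)]; exact zero_mem K
  refine ⟨fun htop => ?_, fun {x y} hxy => ?_⟩
  · rw [Ideal.eq_top_iff_one, mem_radical_annihilator_iff] at htop
    obtain ⟨n, hn⟩ := htop
    exact hne fun θ => by simpa using hn θ
  · simp only [mem_radical_annihilator_iff] at hxy ⊢
    obtain ⟨n, hn⟩ := hxy
    refine (surjective_smul_or_exists_pow_smul_eq_zero hN x).symm.imp_right fun hx => ?_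
    refine (surjective_smul_or_exists_pow_smul_eq_zero hN y).resolve_left fun hy => ?_
    refine hne fun θ => ?_
    obtain ⟨η, rfl⟩ := surjective_pow_smul hx n θ
    obtain ⟨ζ, rfl⟩ := surjective_pow_smul hy n η
    simp only [smul_smul, ← mul_pow, hn]

lemma hasGenericDivisibility_of_supIrred [IsNoetherianRing R] [IsArtinian R L] (p : Ideal R)
    (hN : SupIrred N) : HasGenericDivisibility p N := by
  by_cases hp : p ≤ N.annihilator.radical
  · obtain ⟨e, he⟩ := Ideal.exists_pow_le_of_le_radical_of_fg hp (IsNoetherian.noetherian p)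
    refine ⟨e, forGeneric_of_forall fun z _ s c hc θ hθ => ⟨0, zero_mem _, ?_⟩⟩
    rw [smul_zero, Submodule.mem_annihilator.1 (he hc) θ hθ]
  · refine ⟨0, (forGeneric_notMem (isPrime_radical_annihilator hN) hp).mono ?_⟩
    intro z _ hzN s c _ θ hθ
    have hz := (surjective_smul_or_exists_pow_smul_eq_zero hN z).resolve_right
      (mt mem_radical_annihilator_iff.2 hzN)
    obtain ⟨θ', hθ'⟩ := surjective_pow_smul hz s ⟨c • θ, N.smul_mem c hθ⟩
    exact ⟨θ', θ'.2, (congrArg Subtype.val hθ').symm⟩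

end SupIrred

lemma hasGenericDivisibility [IsNoetherianRing R] [IsArtinian R L] (p : Ideal R)
    (N : Submodule R L) : HasGenericDivisibility p N := by
  obtain ⟨s, rfl, hs⟩ := exists_supIrred_decomposition N
  exact Finset.sup_induction hasGenericDivisibility_bot (fun _ h₁ _ h₂ => h₁.sup h₂)
    fun N hN => hasGenericDivisibility_of_supIrred p (hs hN)

variable {t : ℕ} {g : Fin t → R}

lemma mem_limitClosure_pow_iff {n : ℕ} (hn : 0 < n) {a : R} :
    a ∈ limitClosure (M := R) (g ^ n) ↔ ∃ j, (∏ i, g i) ^ j * a ∈ powSpan g (n + j) := by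
  simp only [mem_limitClosure, powSpan_pow, Pi.pow_apply, Finset.prod_pow]
  constructor
  · rintro ⟨j, hj⟩
    refine ⟨n * j, ?_⟩
    rwa [pow_mul, show n + n * j = n * (j + 1) by ring]
  · rintro ⟨j, hj⟩
    obtain ⟨n, rfl⟩ := Nat.exists_eq_add_of_lt hn
    refine ⟨j, ?_⟩
    have hmem := prod_pow_mul_mem_powSpan (n * j) hj
    rw [← mul_assoc, ← pow_add] at hmem
    convert hmem using 2
    · ring
    · rw [← pow_mul]; congr 1; ring

namespace FracModel

variable (F : FracModel g)

lemma frac_eq_zero_iff_mem_limitClosure {n : ℕ} (hn : 0 < n) (a : R) :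
    F.frac n a = 0 ↔ a ∈ limitClosure (M := R) (g ^ n) := by
  rw [F.frac_eq_zero_iff, mem_limitClosure_pow_iff hn]

lemma powTorsion_le_powTorsion {y z : R}
    (hy : y ∈ (Ideal.span (Set.range (Fin.cons z g : Fin (t + 1) → R))).radical) :
    powTorsion z F ≤ powTorsion y F := by
  intro θ hθ
  let J : Ideal R := LinearMap.ker (LinearMap.toSpanSingleton R F θ)
  have hJ : Ideal.span (Set.range (Fin.cons z g : Fin (t + 1) → R)) ≤ J.radical := by
    rw [span_range_cons, sup_le_iff, Ideal.span_singleton_le_iff_mem, Ideal.span_le]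
    refine ⟨mem_powTorsion.1 hθ, ?_⟩
    rintro _ ⟨i, rfl⟩
    obtain ⟨n, a, rfl⟩ := F.exists_frac_eq θ
    refine ⟨n, LinearMap.mem_ker.2 ?_⟩
    rw [LinearMap.toSpanSingleton_apply, ← map_smul, F.frac_eq_zero_iff]
    exact ⟨0, by simpa using Ideal.mul_mem_right _ _ (pow_mem_powSpan g n i)⟩
  exact mem_powTorsion.2 (Ideal.radical_le_radical_iff.2 hJ hy)

lemma exists_frac_sub_smul_mem_powTorsion {z ρ : R} {s n : ℕ}
    (hρ : ρ ∈ limitClosure (M := R) (Fin.cons (z ^ s) (g ^ n) : Fin (t + 1) → R)) :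
    ∃ θ : F, F.frac n ρ - z ^ s • θ ∈ powTorsion z F := by
  obtain ⟨j, hj⟩ := mem_limitClosure.1 hρ
  simp only [powSpan_cons, powSpan_pow, Fin.prod_cons, Pi.pow_apply, Finset.prod_pow] at hj
  obtain ⟨d, hd⟩ := exists_sub_mul_mem_of_mem_span_singleton_sup hj
  refine ⟨F.frac (n + n * j) d, mem_powTorsion.2 ⟨s * j, ?_⟩⟩
  rw [F.frac_eq_frac_add n (n * j), ← map_smul, ← map_sub, ← map_smul, F.frac_eq_zero_iff]
  refine ⟨0, ?_⟩
  convert hd using 1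
  · congr 1
    ring
  · rw [smul_eq_mul]
    ring

lemma mk_mem_limitClosure_of_frac_eq_smul {n : ℕ} (hn : 0 < n) {w a : R} {θ : F}
    (h : F.frac n a = w • θ) :
    Ideal.Quotient.mk (Ideal.span {w}) a ∈ limitClosure (M := R ⧸ Ideal.span {w})
      ((Ideal.Quotient.mk (Ideal.span {w}) ∘ g) ^ n) := by
  obtain ⟨i, hi⟩ := F.exists_forall_exists_frac_eq θ
  obtain ⟨b, rfl⟩ := hi (n + i) (Nat.le_add_left _ _)
  rw [F.frac_eq_frac_add n i, ← map_smul, ← sub_eq_zero, ← map_sub, F.frac_eq_zero_iff] at h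
  obtain ⟨k, hk⟩ := h
  have hw : Ideal.Quotient.mk (Ideal.span {w}) w = 0 :=
    Ideal.Quotient.eq_zero_iff_mem.2 (Ideal.mem_span_singleton_self w)
  have hmk := Ideal.mem_map_of_mem (Ideal.Quotient.mk (Ideal.span {w})) hk
  simp only [map_powSpan, map_mul, map_sub, map_pow, hw, smul_eq_mul, zero_mul, sub_zero] at hmk
  refine (mem_limitClosure_pow_iff hn).2 ⟨k + i, ?_⟩
  simpa only [Function.comp_apply, ← map_prod, pow_add, mul_assoc, add_assoc, add_comm i k]
    using hmk

end FracModel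

/-- Multiplication by elements of `I` carries the limit closures of `z ^ s, g ^ n` into the limit
closures of `g ^ n` modulo `z ^ s`. -/
def CarriesLimitClosure (I : Ideal R) (z : R) (g : Fin t → R) : Prop :=
  ∀ s n : ℕ, 0 < n →
    ∀ ρ ∈ limitClosure (M := R) (Fin.cons (z ^ s) (g ^ n) : Fin (t + 1) → R), ∀ c ∈ I,
      Ideal.Quotient.mk (Ideal.span {z ^ s}) (c * ρ) ∈
        limitClosure (M := R ⧸ Ideal.span {z ^ s})
          ((Ideal.Quotient.mk (Ideal.span {z ^ s}) ∘ g) ^ n)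

lemma exists_forGeneric_carriesLimitClosure [IsNoetherianRing R] [IsLocalRing R] {z₁ : R}
    (hg : ∀ i, g i ∈ maximalIdeal R) (hz₁ : z₁ ∈ maximalIdeal R)
    (hm : maximalIdeal R ≤ (Ideal.span (Set.range (Fin.cons z₁ g : Fin (t + 1) → R))).radical)
    (p : Ideal R) :
    ∃ e : ℕ, ForGeneric p fun z =>
      z₁ ∈ (Ideal.span (Set.range (Fin.cons z g : Fin (t + 1) → R))).radical →
        CarriesLimitClosure (p ^ e) z g := by
  obtain ⟨F, hF⟩ := exists_fracModel_isArtinian_powTorsion hg hz₁ hm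
  obtain ⟨e, he⟩ := hasGenericDivisibility p (⊤ : Submodule R (powTorsion z₁ F))
  refine ⟨e, he.mono fun z _ hdiv hz₁z s n hn ρ hρ c hc => ?_⟩
  obtain ⟨θ, hθ⟩ := F.exists_frac_sub_smul_mem_powTorsion hρ
  obtain ⟨θ', -, hθ'⟩ := hdiv s c hc ⟨_, F.powTorsion_le_powTorsion hz₁z hθ⟩ trivial
  have hfrac : c • (F.frac n ρ - z ^ s • θ) = z ^ s • (θ' : F) := congrArg Subtype.val hθ'
  refine F.mk_mem_limitClosure_of_frac_eq_smul hn (θ := θ' + c • θ) ?_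
  rw [smul_add, ← hfrac, smul_sub, smul_comm c, sub_add_cancel, ← smul_eq_mul, map_smul]

end Generic

/-! ### Primes just below the maximal ideal -/

section Dimension
universe u
variable {R : Type u} [CommRing R]

lemma map_mk_lt_map_mk {I a b : Ideal R} (ha : I ≤ a) (hab : a < b) :
    a.map (Ideal.Quotient.mk I) < b.map (Ideal.Quotient.mk I) := by
  refine lt_of_le_of_ne (Ideal.map_mono hab.le) fun hmap => hab.ne ?_
  have hcomap := congrArg (Ideal.comap (Ideal.Quotient.mk I)) hmap
  rwa [Ideal.comap_map_of_surjective' _ Ideal.Quotient.mk_surjective,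
    Ideal.comap_map_of_surjective' _ Ideal.Quotient.mk_surjective,
    Ideal.mk_ker, sup_eq_left.2 ha, sup_eq_left.2 (ha.trans hab.le)] at hcomap

/-- A prime just below `m`: the only prime strictly containing `p` is the maximal ideal. -/
structure IsSubmaximalPrime [IsLocalRing R] (p : Ideal R) : Prop where
  isPrime : p.IsPrime
  ne_maximalIdeal : p ≠ maximalIdeal R
  eq_maximalIdeal_of_lt : ∀ q : Ideal R, q.IsPrime → p < q → q = maximalIdeal R

lemma IsSubmaximalPrime.le [IsLocalRing R] {p : Ideal R} (hp : IsSubmaximalPrime p) :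
    p ≤ maximalIdeal R :=
  le_maximalIdeal hp.isPrime.ne_top

lemma exists_le_isSubmaximalPrime [IsNoetherianRing R] [IsLocalRing R] {q : Ideal R}
    (hq : q.IsPrime) (hqm : q ≠ maximalIdeal R) : ∃ p, q ≤ p ∧ IsSubmaximalPrime p := by
  obtain ⟨p, ⟨hp, hpm, hqp⟩, hmax⟩ := set_has_maximal_iff_noetherian.2 ‹IsNoetherianRing R›
    {p : Ideal R | p.IsPrime ∧ p ≠ maximalIdeal R ∧ q ≤ p} ⟨q, hq, hqm, le_rfl⟩
  refine ⟨p, hqp, hp, hpm, fun p' hp' hlt => ?_⟩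
  by_contra hp'm
  exact hmax p' ⟨hp', hp'm, hqp.trans hlt.le⟩ hlt

lemma le_radical_of_forall_isPrime {I J : Ideal R} (h : ∀ q : Ideal R, q.IsPrime → I ≤ q → J ≤ q) :
    J ≤ I.radical := by
  rw [Ideal.radical_eq_sInf]
  exact le_sInf fun q hq => h q hq.2 hq.1

lemma le_radical_span_singleton_sup {I p : Ideal R} {v : R}
    (h : ∀ q₀ ∈ I.minimalPrimes, ∀ q : Ideal R, q.IsPrime → q₀ < q → p ≤ q)
    (hv : ∀ q ∈ I.minimalPrimes, ¬p ≤ q → v ∉ q) : p ≤ (Ideal.span {v} ⊔ I).radical := by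
  refine le_radical_of_forall_isPrime fun q hq hle => ?_
  obtain ⟨q₀, hq₀, hq₀q⟩ := Ideal.exists_minimalPrimes_le (le_sup_right.trans hle)
  by_cases hpq : p ≤ q₀
  · exact hpq.trans hq₀q
  · have hvq : v ∈ q := hle (Ideal.mem_sup_left (Ideal.mem_span_singleton_self v))
    exact h q₀ hq₀ q hq (lt_of_le_of_ne hq₀q fun heq => hv q₀ hq₀ hpq (heq ▸ hvq))

lemma exists_notMem_mul_pow_mem [IsNoetherianRing R] {I p : Ideal R} (hp : p ∈ I.minimalPrimes)
    {v : R} (hv : v ∈ p) : ∃ u, u ∉ p ∧ ∃ c : ℕ, u * v ^ c ∈ I := by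
  have hfin := (Ideal.finite_minimalPrimes_of_isNoetherianRing R I).subset
    (Set.sdiff_subset (t := {p}))
  have hinf : ¬hfin.toFinset.inf id ≤ p := by
    intro hle
    obtain ⟨q, hq, hqp⟩ := (Ideal.IsPrime.inf_le' hp.1.1).1 hle
    obtain ⟨hqI, hqne⟩ := hfin.mem_toFinset.1 hq
    exact hqne (le_antisymm hqp (hp.2 hqI.1 hqp))
  obtain ⟨u, hu, hup⟩ := SetLike.not_le_iff_exists.1 hinf
  have huv : u * v ∈ I.radical := by
    rw [← Ideal.sInf_minimalPrimes, Ideal.mem_sInf]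
    intro q hq
    by_cases hqp : q = p
    · exact hqp ▸ Ideal.mul_mem_left _ _ hv
    · exact Ideal.mul_mem_right _ _ (Finset.inf_le (f := id) (hfin.mem_toFinset.2 ⟨hq, hqp⟩) hu)
  obtain ⟨c, hc⟩ := huv
  exact ⟨u ^ c, fun h => hup (hp.1.1.mem_of_pow_mem _ h), c, by rwa [← mul_pow]⟩

lemma exists_span_range_eq_of_spanRank_eq {r : ℕ} {I : Ideal R} (hI : I.spanRank = r) :
    ∃ Z : Fin r → R, Ideal.span (Set.range Z) = I := by
  obtain ⟨e⟩ := Cardinal.lift_mk_eq'.1 ((Cardinal.lift_uzero _).trans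
    ((I.generators_card.trans hI).trans (Cardinal.lift_mk_fin r).symm))
  refine ⟨Subtype.val ∘ e.symm, ?_⟩
  rw [Set.range_comp, e.symm.range_eq_univ, Set.image_univ, Subtype.range_coe]
  exact I.span_generators

section Local

variable [IsLocalRing R] {r : ℕ} {p : Ideal R} {w : R} {Z : Fin r → R}

lemma eq_maximalIdeal_of_le_radical {I q : Ideal R} (hq : q.IsPrime)
    (h : maximalIdeal R ≤ I.radical) (hI : I ≤ q) : q = maximalIdeal R :=
  le_antisymm (le_maximalIdeal hq.ne_top) (h.trans (hq.radical_le_iff.2 hI))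

lemma height_le_of_ringKrullDim_le (hp : p.IsPrime) (hpm : p ≠ maximalIdeal R)
    (hdim : ringKrullDim R ≤ (r + 1 : ℕ)) : p.height ≤ r := by
  have hm : (maximalIdeal R).height ≤ r + 1 := by
    rw [← maximalIdeal_height_eq_ringKrullDim] at hdim
    exact_mod_cast hdim
  have hlt := lt_of_le_of_ne (le_maximalIdeal hp.ne_top) hpm
  exact (ENat.add_le_add_iff_right ENat.one_ne_top).1
    ((Ideal.height_add_one_le_of_lt_of_isPrime hlt).trans hm)

lemma exists_mem_le_radical_span_range_cons [IsNoetherianRing R] (hp : p.IsPrime)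
    (hpm : p ≠ maximalIdeal R) (hdim : ringKrullDim R ≤ (r + 1 : ℕ)) (hr : (r : ℕ∞) ≤ p.height) :
    ∃ (w : R) (Z : Fin r → R), w ∈ maximalIdeal R ∧ (∀ i, Z i ∈ p) ∧
      maximalIdeal R ≤ (Ideal.span (Set.range (Fin.cons w Z : Fin (r + 1) → R))).radical := by
  have hpr : p.height = r := le_antisymm (height_le_of_ringKrullDim_le hp hpm hdim) hr
  obtain ⟨I, hIp, hrank, hheight⟩ := Ideal.exists_spanRank_eq_and_height_eq p hp.ne_top
  obtain ⟨Z, rfl⟩ := exists_span_range_eq_of_spanRank_eq (r := r) (by simpa [hpr] using hrank)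
  obtain ⟨w, hw, hwZ⟩ :=
    (forGeneric_notMem_minimalPrimes (maximalIdeal R) (Ideal.span (Set.range Z))).exists_mem
  refine ⟨w, Z, hw, fun i => hIp (Ideal.subset_span ⟨i, rfl⟩), ?_⟩
  rw [span_range_cons]
  refine le_radical_span_singleton_sup (fun q₀ hq₀ q hq hq₀q => ?_) hwZ
  by_contra hmq
  have hqm : q ≠ maximalIdeal R := fun h => hmq h.ge
  have := hq₀.1.1
  have hr₀ : (r : ℕ∞) ≤ q₀.height := hpr ▸ hheight ▸ Ideal.height_mono hq₀.1.2
  have hrr : (r : ℕ∞) + 1 ≤ r := (add_le_add_left hr₀ 1).trans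
    ((Ideal.height_add_one_le_of_lt_of_isPrime hq₀q).trans
      (height_le_of_ringKrullDim_le hq hqm hdim))
  exact (ENat.natCast_add_one_le_iff.1 hrr).false

lemma notMem_of_le_radical (hp : p.IsPrime) (hpm : p ≠ maximalIdeal R) (hZ : ∀ i, Z i ∈ p)
    (hm : maximalIdeal R ≤ (Ideal.span (Set.range (Fin.cons w Z : Fin (r + 1) → R))).radical) :
    w ∉ p := by
  intro hwp
  refine hpm (eq_maximalIdeal_of_le_radical hp hm (Ideal.span_le.2 ?_))
  rintro _ ⟨i, rfl⟩
  exact Fin.cases hwp hZ i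

lemma mem_minimalPrimes_span_range [IsNoetherianRing R] (hp : p.IsPrime)
    (hpm : p ≠ maximalIdeal R) (hw : w ∈ maximalIdeal R) (hZ : ∀ i, Z i ∈ p)
    (hm : maximalIdeal R ≤ (Ideal.span (Set.range (Fin.cons w Z : Fin (r + 1) → R))).radical) :
    p ∈ (Ideal.span (Set.range Z)).minimalPrimes := by
  have hpm' := lt_of_le_of_ne (le_maximalIdeal hp.ne_top) hpm
  have hZp : Set.range Z ⊆ p := Set.range_subset_iff.2 hZ
  rw [Fin.range_cons] at hm
  refine Ideal.mem_minimalPrimes_span_of_mem_minimalPrimes_span_insert hpm' w (Set.range Z)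
    ⟨⟨inferInstance, Ideal.span_le.2 (Set.insert_subset hw (hZp.trans hpm'.le))⟩, ?_⟩ _ hZp
    ((Set.subset_insert _ _).trans (Ideal.subset_span.trans Ideal.le_radical))
  exact fun q hq _ => (eq_maximalIdeal_of_le_radical hq.1 hm hq.2).ge

lemma forGeneric_le_radical_span_singleton_sup [IsNoetherianRing R] (hp : p.IsPrime)
    (hw : w ∈ maximalIdeal R)
    (hm : maximalIdeal R ≤ (Ideal.span (Set.range (Fin.cons w Z : Fin (r + 1) → R))).radical) :
    ForGeneric p fun v => p ≤ (Ideal.span {v} ⊔ Ideal.span (Set.range Z)).radical := by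
  refine (forGeneric_notMem_minimalPrimes p (Ideal.span (Set.range Z))).mono fun v _ hv =>
    le_radical_span_singleton_sup (fun q₀ hq₀ q hq hlt => ?_) hv
  by_cases hqm : q = maximalIdeal R
  · exact hqm ▸ le_maximalIdeal hp.ne_top
  · have hqZ : ∀ i, Z i ∈ q := fun i => hlt.le (hq₀.1.2 (Ideal.subset_span ⟨i, rfl⟩))
    have hqmin := mem_minimalPrimes_span_range hq hqm hw hqZ hm
    exact absurd (hqmin.2 hq₀.1 hlt.le) hlt.not_ge

lemma IsSubmaximalPrime.maximalIdeal_le_radical {I : Ideal R} {u : R} (hp : IsSubmaximalPrime p)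
    (hu : u ∉ p) (hI : p ≤ I.radical) : maximalIdeal R ≤ (Ideal.span {u} ⊔ I).radical := by
  refine le_radical_of_forall_isPrime fun q hq hle => ?_
  have hpq : p ≤ q := hI.trans (hq.radical_le_iff.2 (le_sup_right.trans hle))
  refine (hp.eq_maximalIdeal_of_lt q hq (lt_of_le_of_ne hpq fun heq => hu ?_)).ge
  exact heq ▸ hle (Ideal.mem_sup_left (Ideal.mem_span_singleton_self u))

lemma IsSubmaximalPrime.map {S : Type*} [CommRing S] [IsLocalRing S] {f : R →+* S}
    (hf : Function.Surjective f) (hp : IsSubmaximalPrime p) (hfp : RingHom.ker f ≤ p) :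
    IsSubmaximalPrime (p.map f) := by
  have hcomap : (p.map f).comap f = p := by
    rw [Ideal.comap_map_of_surjective' _ hf, sup_eq_left.2 hfp]
  have := hp.isPrime
  refine ⟨Ideal.map_isPrime_of_surjective hf hfp, fun h => hp.ne_maximalIdeal ?_,
    fun q hq hlt => ?_⟩
  · have := IsLocalHom.of_surjective f hf
    exact hcomap.symm.trans (h ▸ ((local_hom_TFAE f).out 0 4).1 this)
  · have hq' : q.comap f = maximalIdeal R := by
      refine hp.eq_maximalIdeal_of_lt _ (hq.comap f)
        (lt_of_le_of_ne (Ideal.map_le_iff_le_comap.1 hlt.le) fun h => hlt.ne ?_)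
      rw [h, Ideal.map_comap_of_surjective f hf]
    rw [← map_maximalIdeal_of_surjective f hf, ← hq', Ideal.map_comap_of_surjective f hf]

end Local

lemma ringKrullDim_le_of_map_eq_zero {S : Type*} [CommRing S] [IsDomain R] {f : R →+* S}
    (hf : Function.Surjective f) {x : R} (hx : x ≠ 0) (hfx : f x = 0) {n : ℕ}
    (hdim : ringKrullDim R ≤ (n + 1 : ℕ)) : ringKrullDim S ≤ n := by
  have hquot : ringKrullDim S ≤ ringKrullDim (R ⧸ Ideal.span {x}) :=
    ringKrullDim_le_of_surjective (Ideal.Quotient.lift _ f fun a ha => by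
      obtain ⟨c, rfl⟩ := Ideal.mem_span_singleton'.1 ha
      rw [map_mul, hfx, mul_zero]) (Ideal.Quotient.lift_surjective_of_surjective _ _ hf)
  have hsucc := (ringKrullDim_quotient_succ_le_of_nonZeroDivisor
    (mem_nonZeroDivisors_of_ne_zero hx)).trans hdim
  exact hquot.trans (ENat.WithBot.add_le_add_one_right_iff.1 (by exact_mod_cast hsucc))

lemma ringKrullDim_le_of_map_eq_zero_of_map_eq_zero [IsDomain R] {S : Type*}
    [CommRing S] [IsDomain S] {f : R →+* S} (hf : Function.Surjective f) {p : Ideal R}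
    (hpf : ¬p ≤ RingHom.ker f) {b z : R} (hb : b ≠ 0)
    (hz : ∀ q ∈ (Ideal.span {b}).minimalPrimes, ¬p ≤ q → z ∉ q) (hfb : f b = 0) (hfz : f z = 0)
    {n : ℕ} (hdim : ringKrullDim R ≤ (n + 1 + 1 : ℕ)) : ringKrullDim S ≤ n := by
  have := RingHom.ker_isPrime f
  obtain ⟨q, hq, hqf⟩ := Ideal.exists_minimalPrimes_le
    ((Ideal.span_singleton_le_iff_mem _).2 (RingHom.mem_ker.2 hfb))
  have := hq.1.1
  have hzq : Ideal.Quotient.mk q z ≠ 0 := fun h =>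
    hz q hq (fun hpq => hpf (hpq.trans hqf)) (Ideal.Quotient.eq_zero_iff_mem.1 h)
  have hdimq : ringKrullDim (R ⧸ q) ≤ (n + 1 : ℕ) :=
    ringKrullDim_le_of_map_eq_zero Ideal.Quotient.mk_surjective hb
      (Ideal.Quotient.eq_zero_iff_mem.2 (hq.1.2 (Ideal.mem_span_singleton_self b))) hdim
  exact ringKrullDim_le_of_map_eq_zero
    (Ideal.Quotient.lift_surjective_of_surjective q (fun a ha => RingHom.mem_ker.1 (hqf ha)) hf)
    hzq hfz hdimq

lemma exists_minimalPrimes_height_le (k : ℕ) : ∀ {p : Ideal R}, p.IsPrime → (k : ℕ∞) ≤ p.height →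
    ∃ P ∈ minimalPrimes R, P ≤ p ∧ (k : ℕ∞) ≤ (p.map (Ideal.Quotient.mk P)).height := by
  induction k with
  | zero =>
    intro p hp _
    obtain ⟨P, hP, hPp⟩ := Ideal.exists_minimalPrimes_le (bot_le (a := p))
    exact ⟨P, hP, hPp, by simp⟩
  | succ k ih =>
    intro p hp hk
    push_cast at hk
    have hlt := (ENat.natCast_add_one_le_iff.1 hk).not_ge
    rw [Ideal.height_le_iff] at hlt
    push Not at hlt
    obtain ⟨q, hq, hqp, hkq⟩ := hlt
    obtain ⟨P, hP, hPq, hkP⟩ := ih hq hkq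
    refine ⟨P, hP, hPq.trans hqp.le, ?_⟩
    have := Ideal.isPrime_map_quotientMk_of_isPrime hPq
    have := Ideal.isPrime_map_quotientMk_of_isPrime (hPq.trans hqp.le)
    push_cast
    exact (add_le_add_left hkP 1).trans
      (Ideal.height_add_one_le_of_lt_of_isPrime (map_mk_lt_map_mk hPq hqp))

lemma exists_isPrime_quotient_height_le [IsNoetherianRing R] {k : ℕ} {p : Ideal R} (hp : p.IsPrime)
    {z : R} (hz : z ∈ p) (hk : ((k + 1 : ℕ) : ℕ∞) ≤ p.height) :
    ∃ P : Ideal (R ⧸ Ideal.span {z}), P.IsPrime ∧ P.comap (Ideal.Quotient.mk _) ≤ p ∧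
      (k : ℕ∞) ≤
        (p.map ((Ideal.Quotient.mk P).comp (Ideal.Quotient.mk (Ideal.span {z})))).height := by
  have hzp := (Ideal.span_singleton_le_iff_mem p).2 hz
  have hk' : (k : ℕ∞) ≤ (p.map (Ideal.Quotient.mk (Ideal.span {z}))).height := by
    push_cast at hk
    exact (ENat.add_le_add_iff_right ENat.one_ne_top).1
      (hk.trans (Ideal.height_le_height_add_one_of_mem hz))
  obtain ⟨P, hP, hPp, hkP⟩ :=
    exists_minimalPrimes_height_le k (Ideal.isPrime_map_quotientMk_of_isPrime hzp) hk'
  refine ⟨P, hP.1.1, (Ideal.comap_mono hPp).trans ?_, by rwa [← Ideal.map_map]⟩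
  rw [Ideal.comap_map_of_surjective' _ Ideal.Quotient.mk_surjective, Ideal.mk_ker,
    sup_eq_left.2 hzp]

end Dimension

/-! ### Coordinates adapted to a prime just below the maximal ideal -/

section AdaptedCoordinates

variable {R : Type*} [CommRing R]

lemma mem_limitClosure_cons_cons_comm {r : ℕ} {w z a : R} {Z : Fin r → R} :
    a ∈ limitClosure (M := R) (Fin.cons w (Fin.cons z Z : Fin (r + 1) → R) : Fin (r + 2) → R) ↔
      a ∈ limitClosure (M := R)
        (Fin.cons z (Fin.cons w Z : Fin (r + 1) → R) : Fin (r + 2) → R) := by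
  simp only [mem_limitClosure, powSpan_cons, Fin.prod_cons, sup_left_comm (Ideal.span {w ^ _}),
    mul_left_comm w z]

lemma forall_cons_mem {r : ℕ} {I : Ideal R} {z : R} {Z : Fin r → R} (hz : z ∈ I)
    (hZ : ∀ i, Z i ∈ I) (i : Fin (r + 1)) : (Fin.cons z Z : Fin (r + 1) → R) i ∈ I :=
  Fin.cases hz hZ i

lemma span_range_cons_le_radical {r s n : ℕ} {z : R} {Z : Fin r → R} :
    Ideal.span (Set.range (Fin.cons z Z : Fin (r + 1) → R)) ≤
      (Ideal.span (Set.range (Fin.cons (z ^ s) (Z ^ n) : Fin (r + 1) → R))).radical := by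
  rw [span_range_cons, span_range_cons, sup_le_iff, Ideal.span_singleton_le_iff_mem]
  exact ⟨⟨s, Ideal.mem_sup_left (Ideal.mem_span_singleton_self _)⟩,
    (span_range_le_radical_powSpan Z n).trans (Ideal.radical_mono le_sup_right)⟩

variable [IsLocalRing R]

lemma isSOP_of_le_radical {t : ℕ} {x : Fin t → R} (hx : ∀ i, x i ∈ maximalIdeal R)
    (hm : maximalIdeal R ≤ (Ideal.span (Set.range x)).radical) : IsSOP R x :=
  ⟨hx, le_antisymm ((maximalIdeal.isMaximal R).isPrime.radical_le_iff.2
    (Ideal.span_le.2 (Set.range_subset_iff.2 hx))) hm⟩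

lemma IsSubmaximalPrime.le_radical_span_range_cons {p : Ideal R} (hp : IsSubmaximalPrime p)
    {r k n : ℕ} {w v : R} {Z Z' : Fin r → R}
    (hm : maximalIdeal R ≤
      (Ideal.span (Set.range (Fin.cons w Z : Fin (r + 1) → R))).radical)
    (hpv : p ≤ (Ideal.span {v} ⊔ Ideal.span (Set.range Z)).radical)
    (hZ : Ideal.span (Set.range Z) ≤ (Ideal.span (Set.range Z')).radical) :
    p ≤ (Ideal.span (Set.range (Fin.cons (v ^ k * w ^ n) Z' : Fin (r + 1) → R))).radical := by
  refine le_radical_of_forall_isPrime fun q hq hle => ?_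
  rw [span_range_cons, sup_le_iff, Ideal.span_singleton_le_iff_mem] at hle
  obtain ⟨hvw, hZ'⟩ := hle
  have hZq := hZ.trans (hq.radical_le_iff.2 hZ')
  rcases hq.mem_or_mem hvw with hv | hw
  · exact hpv.trans (hq.radical_le_iff.2 (sup_le
      ((Ideal.span_singleton_le_iff_mem _).2 (hq.mem_of_pow_mem k hv)) hZq))
  · refine hp.le.trans (hm.trans (hq.radical_le_iff.2 ?_))
    rw [span_range_cons]
    exact sup_le ((Ideal.span_singleton_le_iff_mem _).2 (hq.mem_of_pow_mem n hw)) hZq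

/-- The element `b` detects the determinantal kernel of `p`: for some system `x` of `t` parameters
there is a class `a` in `R/(x)^lim` that is killed by all determinantal maps to sequences inside
`p`, while `b * a ∉ (x)^lim`. -/
def DetectsDetKer (p : Ideal R) (t : ℕ) (b : R) : Prop :=
  ∃ x : Fin t → R, IsSOP R x ∧ ∃ a ∈ detKer p x, b * a ∉ limitClosure (M := R) x

/-- Coordinates `w, z, Z` on `R` with `z, Z ⊆ p`, where `z` is so generic that `p ^ e` carries limit
closures of `z ^ s, w ^ n, Z ^ n` into limit closures modulo `z ^ s`; moreover an element `v` that
cuts out `p` up to radical on `z = Z = 0`, and some `u ∉ p` such that `u * v ^ c` vanishes there. -/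
structure AdaptedCoordinates (p : Ideal R) (r : ℕ) where
  w : R
  z : R
  Z : Fin r → R
  v : R
  u : R
  c : ℕ
  e : ℕ
  w_mem : w ∈ maximalIdeal R
  z_mem : z ∈ p
  Z_mem : ∀ i, Z i ∈ p
  v_mem : v ∈ p
  u_notMem : u ∉ p
  maximalIdeal_le_radical : maximalIdeal R ≤ (Ideal.span (Set.range
    (Fin.cons w (Fin.cons z Z : Fin (r + 1) → R) : Fin (r + 2) → R))).radical
  le_radical : p ≤
    (Ideal.span {v} ⊔ Ideal.span (Set.range (Fin.cons z Z : Fin (r + 1) → R))).radical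
  mul_pow_mem : u * v ^ c ∈ Ideal.span (Set.range (Fin.cons z Z : Fin (r + 1) → R))
  carriesLimitClosure : CarriesLimitClosure (p ^ e) z (Fin.cons w Z : Fin (r + 1) → R)

lemma exists_forGeneric_coordinates [IsNoetherianRing R] {r : ℕ} {p : Ideal R}
    (hp : IsSubmaximalPrime p) (hdim : ringKrullDim R ≤ (r + 1 + 1 : ℕ))
    (hr : ((r + 1 : ℕ) : ℕ∞) ≤ p.height) :
    ∃ (w : R) (Z : Fin r → R) (e : ℕ), w ∈ maximalIdeal R ∧ (∀ i, Z i ∈ p) ∧ ForGeneric p fun z =>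
      maximalIdeal R ≤ (Ideal.span (Set.range
        (Fin.cons w (Fin.cons z Z : Fin (r + 1) → R) : Fin (r + 2) → R))).radical ∧
      CarriesLimitClosure (p ^ e) z (Fin.cons w Z : Fin (r + 1) → R) := by
  obtain ⟨w, Y, hw, hY, hm⟩ :=
    exists_mem_le_radical_span_range_cons hp.isPrime hp.ne_maximalIdeal hdim hr
  obtain ⟨z₁, Z, rfl⟩ : ∃ z₁ Z, Y = Fin.cons z₁ Z := ⟨Y 0, Fin.tail Y, (Fin.cons_self_tail Y).symm⟩
  have hwp : w ∉ p := notMem_of_le_radical hp.isPrime hp.ne_maximalIdeal hY hm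
  have hz₁ : z₁ ∈ maximalIdeal R := hp.le (hY 0)
  have hZ : ∀ i, Z i ∈ p := fun i => hY i.succ
  rw [span_range_cons, span_range_cons, sup_left_comm, ← span_range_cons w, ← span_range_cons] at hm
  obtain ⟨e, he⟩ := exists_forGeneric_carriesLimitClosure
    (forall_cons_mem hw fun i => hp.le (hZ i)) hz₁ hm p
  refine ⟨w, Z, e, hw, hZ, (he.and
    (forGeneric_le_radical_span_singleton_sup hp.isPrime hz₁ hm)).mono fun z _ ⟨hlim, hpz⟩ => ?_⟩
  have hmz : maximalIdeal R ≤ (Ideal.span (Set.range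
      (Fin.cons z (Fin.cons w Z : Fin (r + 1) → R) : Fin (r + 2) → R))).radical := by
    refine (hp.maximalIdeal_le_radical hwp hpz).trans (Ideal.radical_mono ?_)
    exact sup_le ((Ideal.span_singleton_le_iff_mem _).2 (Ideal.subset_span ⟨1, rfl⟩))
      (span_range_cons _ _).ge
  refine ⟨?_, hlim (hmz hz₁)⟩
  rwa [span_range_cons, span_range_cons, sup_left_comm, ← span_range_cons w, ← span_range_cons]

lemma exists_adaptedCoordinates [IsNoetherianRing R] {r : ℕ} {p : Ideal R}
    (hp : IsSubmaximalPrime p) (hdim : ringKrullDim R ≤ (r + 1 + 1 : ℕ))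
    (hr : ((r + 1 : ℕ) : ℕ∞) ≤ p.height) {P : R → Prop} (hP : ForGeneric p P) :
    ∃ C : AdaptedCoordinates p r, P C.z := by
  obtain ⟨w, Z, e, hw, hZ, hgen⟩ := exists_forGeneric_coordinates hp hdim hr
  obtain ⟨z, hz, ⟨hm, hlim⟩, hPz⟩ := (hgen.and hP).exists_mem
  have hzZ := forall_cons_mem hz hZ
  obtain ⟨v, hv, hpv⟩ := (forGeneric_le_radical_span_singleton_sup hp.isPrime hw hm).exists_mem
  obtain ⟨u, hu, c, huv⟩ := exists_notMem_mul_pow_mem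
    (mem_minimalPrimes_span_range hp.isPrime hp.ne_maximalIdeal hw hzZ hm) hv
  exact ⟨⟨w, z, Z, v, u, c, e, hw, hz, hZ, hv, hu, hm, hpv, huv, hlim⟩, hPz⟩

namespace AdaptedCoordinates

variable {r : ℕ} {p : Ideal R} (C : AdaptedCoordinates p r)

lemma w_notMem (hp : IsSubmaximalPrime p) : C.w ∉ p :=
  notMem_of_le_radical hp.isPrime hp.ne_maximalIdeal (forall_cons_mem C.z_mem C.Z_mem)
    C.maximalIdeal_le_radical

variable {C} {s n : ℕ}

lemma isSOP (hp : IsSubmaximalPrime p) (hs : 0 < s) (hn : 0 < n) :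
    IsSOP R (Fin.cons (C.w ^ n) (Fin.cons (C.z ^ s) (C.Z ^ n) : Fin (r + 1) → R) :
      Fin (r + 2) → R) := by
  have hmem := forall_cons_mem (Ideal.pow_mem_of_mem _ C.w_mem n hn) (forall_cons_mem
    (Ideal.pow_mem_of_mem _ (hp.le C.z_mem) s hs) fun i =>
      Ideal.pow_mem_of_mem _ (hp.le (C.Z_mem i)) n hn)
  refine isSOP_of_le_radical hmem
    (C.maximalIdeal_le_radical.trans (Ideal.radical_le_radical_iff.2 ?_))
  rw [span_range_cons, span_range_cons (C.w ^ n), sup_le_iff, Ideal.span_singleton_le_iff_mem]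
  exact ⟨⟨n, Ideal.mem_sup_left (Ideal.mem_span_singleton_self _)⟩,
    span_range_cons_le_radical.trans (Ideal.radical_mono le_sup_right)⟩

lemma mem_detKer (hp : IsSubmaximalPrime p) {k : ℕ} {a : R}
    (ha : C.v ^ k * a ∈ Ideal.span {C.z ^ s} ⊔ powSpan C.Z n) :
    a ∈ detKer p (Fin.cons (C.w ^ n) (Fin.cons (C.z ^ s) (C.Z ^ n) : Fin (r + 1) → R) :
      Fin (r + 2) → R) :=
  mem_detKer_cons (v := C.v) (s := k) (by rwa [span_range_cons])
    (hp.le_radical_span_range_cons C.maximalIdeal_le_radical C.le_radical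
      span_range_cons_le_radical)

lemma mk_mul_mem_limitClosure_of_not_detectsDetKer (hp : IsSubmaximalPrime p) {b : R}
    (hb : ¬DetectsDetKer p (r + 2) b) (hs : 0 < s) (hn : 0 < n) {k : ℕ} {a : R}
    (ha : C.v ^ k * a ∈ Ideal.span {C.z ^ s} ⊔ powSpan C.Z n) {d : R} (hd : d ∈ p ^ C.e) :
    Ideal.Quotient.mk (Ideal.span {C.z ^ s}) (d * (b * a)) ∈
      limitClosure (M := R ⧸ Ideal.span {C.z ^ s})
        ((Ideal.Quotient.mk (Ideal.span {C.z ^ s}) ∘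
          (Fin.cons C.w C.Z : Fin (r + 1) → R)) ^ n) := by
  refine C.carriesLimitClosure s n hn (b * a) ?_ d hd
  rw [cons_pow, mem_limitClosure_cons_cons_comm]
  by_contra hba
  exact hb ⟨_, isSOP hp hs hn, a, mem_detKer hp ha, hba⟩

end AdaptedCoordinates

lemma eq_zero_of_forall_exists_mul_mem_pow {R : Type*} [CommRing R] [IsNoetherianRing R]
    [IsDomain R] {p : Ideal R} (hp : p.IsPrime) {b : R}
    (h : ∀ j : ℕ, ∃ σ, σ ∉ p ∧ σ * b ∈ p ^ j) : b = 0 := by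
  let L := Localization.AtPrime p
  have : IsNoetherianRing L := IsLocalization.isNoetherianRing p.primeCompl L inferInstance
  refine IsLocalization.injective L p.primeCompl_le_nonZeroDivisors ?_
  rw [map_zero, ← Ideal.mem_bot,
    ← Ideal.iInf_pow_eq_bot_of_isLocalRing _ (maximalIdeal.isMaximal L).ne_top, Ideal.mem_iInf]
  intro j
  obtain ⟨σ, hσ, hσb⟩ := h j
  have hunit : IsUnit (algebraMap R L σ) := IsLocalization.map_units L (⟨σ, hσ⟩ : p.primeCompl)
  rw [← Ideal.unit_mul_mem_iff_mem _ hunit, ← map_mul, ← Localization.AtPrime.map_eq_maximalIdeal,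
    ← Ideal.map_pow]
  exact Ideal.mem_map_of_mem (algebraMap R L) hσb

end AdaptedCoordinates

/-! ### Nonvanishing of the determinantal kernel -/

section Nonvanishing

lemma detectsDetKer_one {D : Type*} [CommRing D] [IsNoetherianRing D] [IsLocalRing D] [IsDomain D]
    {p : Ideal D} (hp : IsSubmaximalPrime p) (hdim : ringKrullDim D ≤ (0 + 1 : ℕ)) {b : D}
    (hb : b ≠ 0) : DetectsDetKer p 1 b := by
  obtain rfl : p = ⊥ := by
    have := hp.isPrime
    have hheight := height_le_of_ringKrullDim_le hp.isPrime hp.ne_maximalIdeal hdim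
    have hmin := Ideal.height_eq_zero_iff.1 (nonpos_iff_eq_zero.1 hheight)
    rwa [IsDomain.minimalPrimes_eq_singleton_bot] at hmin
  obtain ⟨w, hw, hw0⟩ := SetLike.exists_of_lt (lt_of_le_of_ne hp.le hp.ne_maximalIdeal)
  have hw0 : w ≠ 0 := hw0
  obtain ⟨n, hn, hbn⟩ := exists_notMem_limitClosure_pow hw
    (a := b) fun N => mul_ne_zero (pow_ne_zero N hw0) hb
  refine ⟨fun _ => w ^ n, isSOP_of_le_radical (fun _ => Ideal.pow_mem_of_mem _ hw n hn) ?_, 1, ?_,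
    by rwa [mul_one]⟩
  · have hrad := hp.maximalIdeal_le_radical (I := ⊥) hw0 bot_le
    rw [sup_bot_eq] at hrad
    rwa [Set.range_const, ← Ideal.span_singleton_pow, Ideal.radical_pow _ hn.ne']
  · convert mem_detKer_cons (p := (⊥ : Ideal D)) (w := w ^ n) (v := 0) (s := 1)
      (Z := (Fin.elim0 : Fin 0 → D)) (a := 1) (by simp) bot_le using 2
    funext i
    fin_cases i
    rfl

lemma AdaptedCoordinates.exists_pow_dvd_of_not_detectsDetKer {D : Type*} [CommRing D]
    [IsNoetherianRing D] [IsLocalRing D] {p : Ideal D} (C : AdaptedCoordinates p 0)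
    (hp : IsSubmaximalPrime p) {b : D} (hb : ¬DetectsDetKer p 2 b) {s : ℕ} (hs : 0 < s) :
    ∃ N, C.z ^ s ∣ C.w ^ N * (C.z ^ C.e * (b * C.u ^ s)) := by
  let π := Ideal.Quotient.mk (Ideal.span {C.z ^ s})
  have : Nontrivial (D ⧸ Ideal.span {C.z ^ s}) := Ideal.Quotient.nontrivial_iff.2 fun htop =>
    hp.isPrime.ne_top (top_le_iff.1 (htop ▸ (Ideal.span_singleton_le_iff_mem _).2
      (Ideal.pow_mem_of_mem _ C.z_mem s hs)))
  have := IsLocalRing.of_surjective' π Ideal.Quotient.mk_surjective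
  have huz : C.v ^ (C.c * s) * C.u ^ s ∈ Ideal.span {C.z ^ s} := by
    have huv := C.mul_pow_mem
    rw [span_range_cons, Set.range_eq_empty, Ideal.span_empty, sup_bot_eq] at huv
    rw [pow_mul, ← mul_pow, mul_comm, Ideal.mem_span_singleton]
    exact pow_dvd_pow_of_dvd (Ideal.mem_span_singleton.1 huv) s
  have hlim : ∀ n, 0 < n → π (C.z ^ C.e * (b * C.u ^ s)) ∈
      limitClosure (M := D ⧸ Ideal.span {C.z ^ s}) fun _ : Fin 1 => π C.w ^ n := by
    intro n hn
    convert mk_mul_mem_limitClosure_of_not_detectsDetKer hp hb hs hn (Ideal.mem_sup_left huz)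
      (Ideal.pow_mem_pow C.z_mem C.e) using 2
    funext i
    fin_cases i
    rfl
  have hπw : π C.w ∈ maximalIdeal (D ⧸ Ideal.span {C.z ^ s}) := by
    rw [← map_maximalIdeal_of_surjective π Ideal.Quotient.mk_surjective]
    exact Ideal.mem_map_of_mem _ C.w_mem
  obtain ⟨N, hN⟩ : ∃ N, π C.w ^ N * π (C.z ^ C.e * (b * C.u ^ s)) = 0 := by
    by_contra! hne
    obtain ⟨n, hn, hn'⟩ := exists_notMem_limitClosure_pow hπw hne
    exact hn' (hlim n hn)
  rw [← map_pow, ← map_mul, Ideal.Quotient.eq_zero_iff_mem, Ideal.mem_span_singleton] at hN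
  exact ⟨N, hN⟩

/-- If every class were undetected, `z ^ e * b * u ^ s` would be `w`-power torsion modulo `z ^ s`
for all `s`. Cancelling `z ^ e` puts multiples of `b` by elements outside `p` into arbitrarily high
powers of `p`. -/
lemma detectsDetKer_two {D : Type*} [CommRing D] [IsNoetherianRing D] [IsLocalRing D] [IsDomain D]
    {p : Ideal D} (hp : IsSubmaximalPrime p) (hdim : ringKrullDim D ≤ (0 + 1 + 1 : ℕ))
    (hr : ((0 + 1 : ℕ) : ℕ∞) ≤ p.height) {b : D} (hb : b ≠ 0) : DetectsDetKer p 2 b := by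
  by_contra hdet
  have hpb : ¬p ≤ ⊥ := fun h => by simp [le_bot_iff.1 h] at hr
  obtain ⟨C, hz0⟩ := exists_adaptedCoordinates hp hdim hr (forGeneric_notMem Ideal.isPrime_bot hpb)
  refine hb (eq_zero_of_forall_exists_mul_mem_pow hp.isPrime fun j => ?_)
  obtain ⟨N, hN⟩ := C.exists_pow_dvd_of_not_detectsDetKer hp hdet (s := C.e + (j + 1)) (by omega)
  refine ⟨C.w ^ N * C.u ^ (C.e + (j + 1)), fun h => ?_, ?_⟩
  · rcases hp.isPrime.mem_or_mem h with hw | hu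
    · exact C.w_notMem hp (hp.isPrime.mem_of_pow_mem _ hw)
    · exact C.u_notMem (hp.isPrime.mem_of_pow_mem _ hu)
  · have hdvd : C.z ^ (j + 1) ∣ C.w ^ N * C.u ^ (C.e + (j + 1)) * b := by
      refine (mul_dvd_mul_iff_left (pow_ne_zero C.e hz0)).1 ?_
      rw [← pow_add]
      convert hN using 1
      ring
    exact Ideal.mem_of_dvd _ ((pow_dvd_pow C.z j.le_succ).trans hdvd) (Ideal.pow_mem_pow C.z_mem j)

lemma AdaptedCoordinates.exists_lift_detKer {R S : Type*} [CommRing R] [IsLocalRing R] [CommRing S]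
    [IsLocalRing S] {p : Ideal R} {r : ℕ} (C : AdaptedCoordinates p r) (hp : IsSubmaximalPrime p)
    {f : R ⧸ Ideal.span {C.z} →+* S} (hf : Function.Surjective f) {x : Fin (r + 1) → S}
    (hx : IsSOP S x) {a : S} (ha : a ∈ detKer (p.map (f.comp (Ideal.Quotient.mk _))) x) {β : R}
    (hβ : f (Ideal.Quotient.mk _ β) * a ∉ limitClosure (M := S) x) :
    ∃ N a₀ s, 0 < N ∧ C.v ^ s * a₀ ∈ Ideal.span {C.z} ⊔ powSpan C.Z N ∧
      Ideal.Quotient.mk (Ideal.span {C.z}) (β * a₀) ∉ limitClosure (M := R ⧸ Ideal.span {C.z})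
        ((Ideal.Quotient.mk (Ideal.span {C.z}) ∘ (Fin.cons C.w C.Z : Fin (r + 1) → R)) ^ N) := by
  let π := Ideal.Quotient.mk (Ideal.span {C.z})
  have hπ : Function.Surjective π := Ideal.Quotient.mk_surjective
  have hm : (maximalIdeal R).map π ≤ (Ideal.span (Set.range
      (Fin.cons (π C.w) (π ∘ C.Z) : Fin (r + 1) → R ⧸ Ideal.span {C.z}))).radical := by
    refine (Ideal.map_mono C.maximalIdeal_le_radical).trans ((Ideal.map_radical_le _).trans ?_)
    rw [span_range_cons, Ideal.map_sup, map_mk_span_range_cons, Ideal.map_span,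
      Set.image_singleton, ← span_range_cons]
  have hmS : ((maximalIdeal R).map π).map f = maximalIdeal S := by
    rw [Ideal.map_map]
    exact map_maximalIdeal_of_surjective (f.comp π) (hf.comp hπ)
  have hmem : ∀ a ∈ p, f (π a) ∈ p.map (f.comp π) := fun a ha => Ideal.mem_map_of_mem (f.comp π) ha
  have hmemS : ∀ a ∈ maximalIdeal R, f (π a) ∈ maximalIdeal S := fun a ha =>
    hmS ▸ Ideal.mem_map_of_mem f (Ideal.mem_map_of_mem π ha)
  have hxm : ∀ i, x i ∈ ((Ideal.span (Set.range
      (Fin.cons (π C.w) (π ∘ C.Z) : Fin (r + 1) → R ⧸ Ideal.span {C.z}))).map f).radical :=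
    fun i => Ideal.map_radical_le f (Ideal.map_mono hm (hmS.symm ▸ hx.1 i))
  have hw := Ideal.map_radical_le π (Ideal.mem_map_of_mem π
    (hp.maximalIdeal_le_radical C.u_notMem C.le_radical C.w_mem))
  rw [← sup_assoc, Ideal.map_sup, Ideal.map_sup, map_mk_span_range_cons, Ideal.map_span,
    Ideal.map_span, Set.image_singleton, Set.image_singleton] at hw
  obtain ⟨N, b, s, hN, hvb, hb⟩ := _root_.exists_lift_detKer hf (β := π β) (w := π C.w)
    (Z := π ∘ C.Z) (u := π C.u) (c := C.c) (fun i => hmem _ (C.Z_mem i)) (hmem _ C.v_mem)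
    (hm (Ideal.mem_map_of_mem π (hp.le C.v_mem)))
    (by
      rw [← map_pow, ← map_mul, ← map_mk_span_range_cons]
      exact Ideal.mem_map_of_mem π C.mul_pow_mem) hw hxm
    (fun i => hx.2 ▸ Fin.cases (hmemS _ C.w_mem) (fun i => hmemS _ (hp.le (C.Z_mem i))) i) ha hβ
  obtain ⟨a₀, rfl⟩ := hπ b
  refine ⟨N, a₀, s, hN, ?_, ?_⟩
  · rw [← map_pow, ← map_mul, ← map_powSpan, ← Ideal.mem_comap,
      Ideal.comap_map_of_surjective' _ hπ, Ideal.mk_ker, sup_comm] at hvb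
    exact hvb
  · rwa [comp_cons, map_mul]

end Nonvanishing

section Induction

universe u

/-- For generic `z ∈ p` the image of `b` in a suitable domain quotient of `D/(z)` is nonzero. The
induction hypothesis is applied there to `q₀ ^ e * b` with `q₀ ∈ p`: the factor `q₀ ^ e` compensates
for passing from limit closures in `D` to limit closures modulo `z`. -/
lemma detectsDetKer_add_two {r : ℕ} (hr0 : 0 < r)
    (ih : ∀ (S : Type u) [CommRing S] [IsNoetherianRing S] [IsLocalRing S] [IsDomain S]
      (p : Ideal S), IsSubmaximalPrime p → ringKrullDim S ≤ (r + 1 : ℕ) → (r : ℕ∞) ≤ p.height →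
      ∀ {b}, b ≠ 0 → DetectsDetKer p (r + 1) b)
    {D : Type u} [CommRing D] [IsNoetherianRing D] [IsLocalRing D] [IsDomain D] {p : Ideal D}
    (hp : IsSubmaximalPrime p) (hdim : ringKrullDim D ≤ (r + 1 + 1 : ℕ))
    (hr : ((r + 1 : ℕ) : ℕ∞) ≤ p.height) {b : D} (hb : b ≠ 0) : DetectsDetKer p (r + 2) b := by
  by_contra hdet
  have hpb : ¬p ≤ ⊥ := fun h => by simp [le_bot_iff.1 h] at hr
  obtain ⟨C, hz0, hzb⟩ := exists_adaptedCoordinates hp hdim hr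
    ((forGeneric_notMem Ideal.isPrime_bot hpb).and (forGeneric_notMem_minimalPrimes p (.span {b})))
  obtain ⟨P, hP, hPp, hPr⟩ := exists_isPrime_quotient_height_le hp.isPrime C.z_mem hr
  let S := (D ⧸ Ideal.span {C.z}) ⧸ P
  let f : D →+* S := (Ideal.Quotient.mk P).comp (Ideal.Quotient.mk _)
  have hf : Function.Surjective f := Ideal.Quotient.mk_surjective.comp Ideal.Quotient.mk_surjective
  have : IsLocalRing S := IsLocalRing.of_surjective' f hf
  have hker : RingHom.ker f = P.comap (Ideal.Quotient.mk _) := by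
    rw [← RingHom.comap_ker, Ideal.mk_ker]
  have hpS : IsSubmaximalPrime (p.map f) := hp.map hf (hker.trans_le hPp)
  have hfz : f C.z = 0 := by
    rw [RingHom.comp_apply, Ideal.Quotient.eq_zero_iff_mem.2 (Ideal.mem_span_singleton_self _),
      map_zero]
  have hpf : ¬p ≤ RingHom.ker f := fun h => by
    rw [(Ideal.map_eq_bot_iff_le_ker f).2 h] at hPr
    simp [hr0.ne'] at hPr
  have hfb : f b ≠ 0 := fun hfb => by
    obtain ⟨k, rfl⟩ := Nat.exists_eq_add_one.2 hr0
    have hS := ringKrullDim_le_of_map_eq_zero_of_map_eq_zero hf hpf hb hzb hfb hfz hdim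
    have hk := hPr.trans (height_le_of_ringKrullDim_le hpS.isPrime hpS.ne_maximalIdeal hS)
    exact absurd (Nat.cast_le.1 hk) k.lt_irrefl
  obtain ⟨q₀, hq₀, hfq₀⟩ := SetLike.not_le_iff_exists.1 hpf
  obtain ⟨x, hx, a, ha, hxa⟩ := ih S (p.map f) hpS (ringKrullDim_le_of_map_eq_zero hf hz0 hfz hdim)
    hPr (b := f (q₀ ^ C.e * b)) (by
      rw [map_mul, map_pow]; exact mul_ne_zero (pow_ne_zero _ hfq₀) hfb)
  obtain ⟨N, a₀, s, hN, hva₀, ha₀⟩ :=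
    C.exists_lift_detKer hp Ideal.Quotient.mk_surjective hx ha hxa
  rw [mul_assoc, ← pow_one C.z] at ha₀
  rw [← pow_one C.z] at hva₀
  exact ha₀ (AdaptedCoordinates.mk_mul_mem_limitClosure_of_not_detectsDetKer hp hdet one_pos hN hva₀
    (Ideal.pow_mem_pow hq₀ C.e))

theorem detectsDetKer {r : ℕ} {D : Type u} [CommRing D] [IsNoetherianRing D] [IsLocalRing D]
    [IsDomain D] {p : Ideal D} (hp : IsSubmaximalPrime p) (hdim : ringKrullDim D ≤ (r + 1 : ℕ))
    (hr : (r : ℕ∞) ≤ p.height) {b : D} (hb : b ≠ 0) : DetectsDetKer p (r + 1) b := by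
  induction r generalizing D with
  | zero => exact detectsDetKer_one hp hdim hb
  | succ r ih =>
    rcases Nat.eq_zero_or_pos r with rfl | hr0
    · exact detectsDetKer_two hp hdim hr hb
    · exact detectsDetKer_add_two hr0 (fun _ _ _ _ _ _ => ih) hp hdim hr hb

end Induction

/-! ### Catenary rings -/

section Catenary

lemma exists_covBy_refinement {α : Type*} [PartialOrder α] [OrderBot α] [WellFoundedLT α]
    [WellFoundedGT α] (s : LTSeries α) : ∃ c : RelSeries {(a, b) : α × α | a ⋖ b},
      c.head = ⊥ ∧ c.last = s.last ∧ s.length ≤ c.length := by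
  wlog hs : s.head = ⊥
  · obtain ⟨c, hc, hlast, hlen⟩ := this (s.cons ⊥ (bot_lt_iff_ne_bot.2 hs)) rfl
    rw [RelSeries.cons_length] at hlen
    exact ⟨c, hc, hlast.trans (RelSeries.last_cons ..),
      (Nat.le_succ _).trans hlen⟩
  obtain ⟨c, i, hci, hhead, hlast⟩ := s.exists_relSeries_covBy
  refine ⟨c, ?_, ?_, by simpa using Fintype.card_le_of_injective i i.injective⟩
  · rw [← hs, RelSeries.head, RelSeries.head, ← hhead, ← hci, Function.comp_apply]
  · rw [RelSeries.last, RelSeries.last, ← hlast, ← hci, Function.comp_apply]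

variable {R : Type*} [CommRing R]

lemma IsCatenaryRing.length_eq (h : IsCatenaryRing R)
    {c₁ c₂ : RelSeries {(a, b) : PrimeSpectrum R × PrimeSpectrum R | a ⋖ b}}
    (hhead : c₁.head = c₂.head) (hlast : c₁.last = c₂.last) : c₁.length = c₂.length :=
  have hlt : {(a, b) : PrimeSpectrum R × PrimeSpectrum R | a ⋖ b} ≤
      {(a, b) : PrimeSpectrum R × PrimeSpectrum R | a < b} := fun _ hab => CovBy.lt hab
  h c₁.head c₁.last (LTSeries.head_le_last (c₁.ofLE hlt)) (c₁.ofLE hlt) (c₂.ofLE hlt) rfl rfl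
    hhead.symm hlast.symm c₁.step c₂.step

lemma IsCatenaryRing.quotient (h : IsCatenaryRing R) (I : Ideal R) : IsCatenaryRing (R ⧸ I) := by
  let E : PrimeSpectrum (R ⧸ I) ↪o PrimeSpectrum R :=
    I.primeSpectrumQuotientOrderIsoZeroLocus.toOrderEmbedding.trans (OrderEmbedding.subtype _)
  have hrange : Set.range E = PrimeSpectrum.zeroLocus (I : Set R) := by
    ext
    simp [E, Set.range_comp, PrimeSpectrum.mem_zeroLocus]
  have hconn : (Set.range E).OrdConnected := by
    rw [hrange]
    exact ⟨fun _ hp _ _ _ hq => Set.Subset.trans hp hq.1⟩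
  intro p q hpq c₁ c₂ hp₁ hq₁ hp₂ hq₂ hc₁ hc₂
  exact h (E p) (E q) (E.monotone hpq) (c₁.map E E.strictMono) (c₂.map E E.strictMono)
    (congrArg E hp₁) (congrArg E hq₁) (congrArg E hp₂) (congrArg E hq₂)
    (fun i => (hc₁ i).image E hconn) (fun i => (hc₂ i).image E hconn)

lemma IsCatenaryRing.ringKrullDim_le_height_add_one [IsNoetherianRing R] [IsLocalRing R]
    [IsDomain R] (h : IsCatenaryRing R) {p : Ideal R} (hp : IsSubmaximalPrime p) :
    ringKrullDim R ≤ p.height + 1 := by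
  let P : PrimeSpectrum R := ⟨p, hp.isPrime⟩
  have hPm : P ⋖ closedPoint R := ⟨lt_of_le_of_ne hp.le fun heq =>
    hp.ne_maximalIdeal (congrArg PrimeSpectrum.asIdeal heq), fun q hPq hqm =>
      hqm.ne (PrimeSpectrum.ext (hp.eq_maximalIdeal_of_lt q.asIdeal q.2 hPq))⟩
  have : FiniteDimensionalOrder (PrimeSpectrum R) := inferInstanceAs (FiniteRingKrullDim R)
  have : WellFoundedLT (PrimeSpectrum R) :=
    ⟨SetRel.IsWellFounded.of_finiteDimensional {(a, b) : PrimeSpectrum R × _ | a < b}⟩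
  have : WellFoundedGT (PrimeSpectrum R) :=
    ⟨SetRel.IsWellFounded.inv_of_finiteDimensional {(a, b) : PrimeSpectrum R × _ | a < b}⟩
  obtain ⟨c, hc, hcP, -⟩ := exists_covBy_refinement (RelSeries.singleton _ P)
  rw [RelSeries.last_singleton] at hcP
  have hlen : (c.length : ℕ∞) ≤ Order.height P :=
    Order.length_le_height (p := c.ofLE fun _ hab => CovBy.lt hab) hcP.le
  rw [← maximalIdeal_height_eq_ringKrullDim]
  refine WithBot.coe_le_coe.2 ?_
  change (closedPoint R).asIdeal.height ≤ P.asIdeal.height + 1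
  rw [PrimeSpectrum.height_eq_orderHeight, PrimeSpectrum.height_eq_orderHeight]
  refine Order.height_le fun s hs => ?_
  obtain ⟨c', hc', hcm, hle⟩ := exists_covBy_refinement s
  have heq := h.length_eq (c₁ := c') (c₂ := c.snoc (closedPoint R) (hcP ▸ hPm))
    (by rw [hc', RelSeries.head_snoc, hc]) (by rw [hcm, hs, RelSeries.last_snoc])
  calc (s.length : ℕ∞) ≤ c'.length := Nat.cast_le.2 hle
    _ = c.length + 1 := by rw [heq, RelSeries.snoc_length, Nat.cast_succ]
    _ ≤ Order.height P + 1 := add_le_add_left hlen 1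

lemma height_le_height_comap {S : Type*} [CommRing S] {f : R →+* S} (hf : Function.Surjective f)
    {q : Ideal S} (hq : q.IsPrime) : q.height ≤ (q.comap f).height := by
  have hmono : StrictMono (PrimeSpectrum.comap f) := strictMono_of_le_iff_le fun a b =>
    (Ideal.comap_le_comap_iff_of_surjective f hf a.asIdeal b.asIdeal).symm
  have hle := Order.height_le_height_apply_of_strictMono _ hmono ⟨q, hq⟩
  rwa [← PrimeSpectrum.height_eq_orderHeight, ← PrimeSpectrum.height_eq_orderHeight] at hle

end Catenary

/-! ### The uniform level -/

section UniformLevel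

section Socle

variable {R M : Type*} [CommRing R] [IsLocalRing R] [AddCommGroup M] [Module R M] [IsArtinian R M]

lemma isNoetherian_torsionBySet_maximalIdeal :
    IsNoetherian R (Submodule.torsionBySet R M (maximalIdeal R : Set R)) := by
  have htors := Submodule.torsionBySet_isTorsionBySet (R := R) (M := M) (maximalIdeal R : Set R)
  have : IsSemisimpleModule R (Submodule.torsionBySet R M (maximalIdeal R : Set R)) := by
    rw [← htors.isSemisimpleModule_iff]
    let : Field (R ⧸ maximalIdeal R) := Ideal.Quotient.field _
    let := htors.module
    infer_instance
  have hiff : IsArtinian R (Submodule.torsionBySet R M (maximalIdeal R : Set R)) ↔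
      IsNoetherian R (Submodule.torsionBySet R M (maximalIdeal R : Set R)) :=
    IsSemisimpleModule.finite_tfae.out 2 1
  exact hiff.1 inferInstance

lemma exists_smul_mem_torsionBySet_maximalIdeal {θ : M} (hθ : θ ≠ 0) :
    ∃ c : R, c • θ ≠ 0 ∧ c • θ ∈ Submodule.torsionBySet R M (maximalIdeal R : Set R) := by
  obtain ⟨S, hS, hSθ⟩ := (IsAtomic.eq_bot_or_exists_atom_le (Submodule.span R {θ})).resolve_left
    (mt Submodule.span_singleton_eq_bot.1 hθ)
  have : IsSimpleModule R S := isSimpleModule_iff_isAtom.2 hS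
  obtain ⟨η, hηS, hη⟩ := Submodule.exists_mem_ne_zero_of_ne_bot hS.1
  obtain ⟨c, rfl⟩ := Submodule.mem_span_singleton.1 (hSθ hηS)
  refine ⟨c, hη, (Submodule.mem_torsionBySet_iff _ _).2 fun y => ?_⟩
  have hann : Module.annihilator R S = maximalIdeal R :=
    eq_maximalIdeal (IsSimpleModule.annihilator_isMaximal (R := R) (M := S))
  exact congrArg Subtype.val (Module.mem_annihilator.1 (hann.ge y.2) ⟨c • θ, hηS⟩)

end Socle

variable {R : Type*} [CommRing R] {t : ℕ}

lemma FracModel.exists_forall_exists_smul_eq_frac [IsLocalRing R] {z : Fin t → R} (F : FracModel z)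
    [IsArtinian R F] :
    ∃ n, 0 < n ∧ ∀ θ : F, θ ≠ 0 → ∃ c a : R, c • θ ≠ 0 ∧ c • θ = F.frac n a := by
  let socle := Submodule.torsionBySet R F (maximalIdeal R : Set R)
  let level : ℕ →o Submodule R socle := ⟨fun n => (LinearMap.range (F.frac n)).comap socle.subtype,
    monotone_nat_of_le_succ fun n _ ⟨b, hb⟩ => ⟨_, (F.frac_eq_frac_succ n b).symm.trans hb⟩⟩
  obtain ⟨k, hk⟩ := monotone_stabilizes_iff_noetherian.2
    (isNoetherian_torsionBySet_maximalIdeal (R := R) (M := F)) level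
  refine ⟨k + 1, k.succ_pos, fun θ hθ => ?_⟩
  obtain ⟨c, hcθ, hc⟩ := exists_smul_mem_torsionBySet_maximalIdeal (R := R) hθ
  obtain ⟨m, hm⟩ := F.exists_forall_exists_frac_eq (c • θ)
  obtain ⟨a, ha⟩ := hm (max m (k + 1)) (le_max_left _ _)
  have hmem : (⟨c • θ, hc⟩ : socle) ∈ level (max m (k + 1)) := ⟨a, ha⟩
  rw [← hk _ (k.le_succ.trans (le_max_right _ _)), hk (k + 1) k.le_succ] at hmem
  obtain ⟨b, hb⟩ := hmem
  exact ⟨c, b, hcθ, hb.symm⟩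

lemma exists_fracModel_isArtinian [IsNoetherianRing R] [IsLocalRing R] {z : Fin t → R}
    (hz : IsSOP R z) : ∃ F : FracModel z, IsArtinian R F := by
  obtain ⟨F, hF⟩ := exists_fracModel_isArtinian_powTorsion (z := 0) hz.1 (zero_mem _)
    (by rw [span_range_cons_zero, hz.2])
  have htop : powTorsion (0 : R) F = ⊤ := eq_top_iff.2 fun θ _ => mem_powTorsion.2 ⟨1, by simp⟩
  rw [htop] at hF
  exact ⟨F, isArtinian_of_linearEquiv (Submodule.topEquiv (R := R) (M := F))⟩

lemma mem_detKer_pow_of_frac_eq_frac {z : Fin t → R} (F : FracModel z) {p : Ideal R} {m n : ℕ}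
    (hn : 0 < n) {a b : R} (hab : F.frac m a = F.frac n b) (ha : a ∈ detKer p (z ^ m)) :
    b ∈ detKer p (z ^ n) := by
  have hdet (k : ℕ) : (Matrix.diagonal (z ^ k)).det = (∏ i, z i) ^ k := by
    rw [Matrix.det_diagonal, ← Finset.prod_pow]; rfl
  rw [F.frac_eq_frac_add m n, F.frac_eq_frac_add n m, add_comm n, ← sub_eq_zero, ← map_sub,
    F.frac_eq_zero_iff_mem_limitClosure (by omega), ← hdet, ← hdet] at hab
  have ha' : (Matrix.diagonal (z ^ n)).det * a ∈ detKer p (z ^ (m + n)) := by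
    rw [add_comm]
    exact det_mul_mem_detKer (diagonal_pow_mulVec_pow z n m) ha
  refine mem_detKer_of_det_mul_mem (diagonal_pow_mulVec_pow z m n)
    (fun i => Ideal.pow_mem_of_mem _ (mem_radical_powSpan z (m + n) i) n hn) ?_
  simpa using sub_mem ha' (limitClosure_le_detKer p _ hab)

lemma DetectsDetKer.not_detKer_le_limitClosure [IsLocalRing R] {z : Fin t → R} (hz : IsSOP R z)
    (F : FracModel z) {n : ℕ} (hn : 0 < n)
    (hF : ∀ θ : F, θ ≠ 0 → ∃ c a : R, c • θ ≠ 0 ∧ c • θ = F.frac n a) {p : Ideal R}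
    (hp : DetectsDetKer p t 1) : ¬detKer p (z ^ n) ≤ limitClosure (M := R) (z ^ n) := by
  obtain ⟨x, hx, a, ha, hax⟩ := hp
  rw [one_mul] at hax
  obtain ⟨N, hN⟩ := exists_forall_pow_succ_mem fun i => hx.2.ge (hz.1 i)
  obtain ⟨C, hC⟩ := exists_mulVec_eq (y := z ^ (N + 1)) hN
  have hCa : F.frac (N + 1) (C.det * a) ≠ 0 := fun h => hax <|
    mem_limitClosure_of_det_mul_mem hC
      (fun i => (radical_powSpan z N.succ_pos).ge (hz.2.ge (hx.1 i)))
      ((F.frac_eq_zero_iff_mem_limitClosure N.succ_pos _).1 h)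
  obtain ⟨c, b, hc, hcb⟩ := hF _ hCa
  refine fun hle => hc (hcb.trans ((F.frac_eq_zero_iff_mem_limitClosure hn b).2 (hle ?_)))
  rw [← map_smul, smul_eq_mul] at hcb
  exact mem_detKer_pow_of_frac_eq_frac F hn hcb (Ideal.mul_mem_left _ c (det_mul_mem_detKer hC ha))

lemma exists_forall_not_detKer_le_limitClosure [IsNoetherianRing R] [IsLocalRing R] {z : Fin t → R}
    (hz : IsSOP R z) : ∃ n, 0 < n ∧ ∀ p : Ideal R, DetectsDetKer p t 1 →
      ¬detKer p (z ^ n) ≤ limitClosure (M := R) (z ^ n) := by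
  obtain ⟨F, hF⟩ := exists_fracModel_isArtinian hz
  obtain ⟨n, hn, hlevel⟩ := F.exists_forall_exists_smul_eq_frac
  exact ⟨n, hn, fun p hp => hp.not_detKer_le_limitClosure hz F hn hlevel⟩

lemma not_detKer_le_limitClosure_of_mulVec_eq {p : Ideal R} {x y : Fin t → R}
    {B : Matrix (Fin t) (Fin t) R} (h : B.mulVec x = y)
    (hx : ∀ i, x i ∈ (Ideal.span (Set.range y)).radical)
    (hp : ¬detKer p x ≤ limitClosure (M := R) x) : ¬detKer p y ≤ limitClosure (M := R) y :=
  fun hle => hp fun _ ha => mem_limitClosure_of_det_mul_mem h hx (hle (det_mul_mem_detKer h ha))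

lemma isSOP_of_forall_mem_limitClosure [IsNoetherianRing R] [IsLocalRing R] {x y : Fin t → R}
    {A : Matrix (Fin t) (Fin t) R} (hA : A.mulVec x = y) (hx : ∀ i, x i ∈ maximalIdeal R)
    (hdet : ∀ p, IsSubmaximalPrime p → ¬detKer p x ≤ limitClosure (M := R) x)
    (hinj : ∀ r, A.det * r ∈ limitClosure (M := R) y → r ∈ limitClosure (M := R) x) :
    IsSOP R y := by
  have hrad : (maximalIdeal R).radical = maximalIdeal R :=
    (maximalIdeal.isMaximal R).isPrime.radical
  refine isSOP_of_le_radical (fun i => hrad ▸ mem_radical_of_mulVec_eq hA (hrad.symm ▸ hx) i)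
    (le_radical_of_forall_isPrime fun q hq hyq => ?_)
  by_contra hqm
  obtain ⟨p, hqp, hp⟩ := exists_le_isSubmaximalPrime hq fun h => hqm h.ge
  exact hdet p hp fun a ha =>
    hinj a (ha y A (fun i => hqp (hyq (Ideal.subset_span (Set.mem_range_self i)))) hA)

end UniformLevel

lemma DetectsDetKer.of_map {R S : Type*} [CommRing R] [IsNoetherianRing R] [IsLocalRing R]
    [CommRing S] [IsLocalRing S] {f : R →+* S} (hf : Function.Surjective f) {r : ℕ} {p : Ideal R}
    (hp : IsSubmaximalPrime p) (hdim : ringKrullDim R ≤ (r + 1 : ℕ)) (hr : (r : ℕ∞) ≤ p.height)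
    {b : R} (h : DetectsDetKer (p.map f) (r + 1) (f b)) : DetectsDetKer p (r + 1) b := by
  obtain ⟨x, hx, a, ha, hba⟩ := h
  have hmap : (maximalIdeal R).map f = maximalIdeal S := map_maximalIdeal_of_surjective f hf
  obtain ⟨w, Z, hw, hZ, hm⟩ :=
    exists_mem_le_radical_span_range_cons hp.isPrime hp.ne_maximalIdeal hdim hr
  obtain ⟨v, hv, hpv⟩ := (forGeneric_le_radical_span_singleton_sup hp.isPrime hw hm).exists_mem
  obtain ⟨u, hu, c, huv⟩ := exists_notMem_mul_pow_mem
    (mem_minimalPrimes_span_range hp.isPrime hp.ne_maximalIdeal hw hZ hm) hv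
  have hwZ := forall_cons_mem hw fun i => hp.le (hZ i)
  obtain ⟨N, a₀, s, hN, ha₀, hba₀⟩ := exists_lift_detKer hf
    (fun i => Ideal.mem_map_of_mem f (hZ i)) (Ideal.mem_map_of_mem f hv) (hm (hp.le hv)) huv
    (by rw [sup_assoc]; exact hp.maximalIdeal_le_radical hu hpv hw)
    (fun i => Ideal.map_radical_le f (Ideal.map_mono hm (hmap.ge (hx.1 i))))
    (fun i => hx.2.ge (hmap.le (Ideal.mem_map_of_mem f (hwZ i)))) ha hba
  refine ⟨(Fin.cons w Z : Fin (r + 1) → R) ^ N, isSOP_of_le_radical (fun i =>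
    Ideal.pow_mem_of_mem _ (hwZ i) N hN) (hm.trans ?_), a₀, ?_, hba₀⟩
  · exact Ideal.radical_le_radical_iff.2 (span_range_le_radical_powSpan _ N)
  · rw [cons_pow]
    exact mem_detKer_cons ha₀ (hp.le_radical_span_range_cons hm hpv
      (span_range_le_radical_powSpan Z N))

lemma detectsDetKer_one_of_isCatenaryRing {R : Type*} [CommRing R] [IsNoetherianRing R]
    [IsLocalRing R] {r : ℕ} (hdim : ringKrullDim R = (r + 1 : ℕ)) (hcat : IsCatenaryRing R)
    (hequi : IsEquidimensionalRing R) {p : Ideal R} (hp : IsSubmaximalPrime p) :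
    DetectsDetKer p (r + 1) 1 := by
  have := hp.isPrime
  obtain ⟨P, hP, hPp⟩ := Ideal.exists_minimalPrimes_le (bot_le (a := p))
  have := hP.1.1
  let π := Ideal.Quotient.mk P
  have hπ : Function.Surjective π := Ideal.Quotient.mk_surjective
  have hker : RingHom.ker π ≤ p := Ideal.mk_ker.trans_le hPp
  have : IsLocalRing (R ⧸ P) := IsLocalRing.of_surjective' π hπ
  have hpP : IsSubmaximalPrime (p.map π) := hp.map hπ hker
  have hdimP : ringKrullDim (R ⧸ P) = (r + 1 : ℕ) := (hequi P hP).trans hdim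
  have hrP : (r : ℕ∞) ≤ (p.map π).height := by
    have hle := (hcat.quotient P).ringKrullDim_le_height_add_one hpP
    rw [hdimP] at hle
    exact (ENat.add_le_add_iff_right ENat.one_ne_top).1 (by exact_mod_cast hle)
  have hr : (r : ℕ∞) ≤ p.height := by
    have hle := height_le_height_comap hπ hpP.isPrime
    rw [Ideal.comap_map_of_surjective' _ hπ, sup_eq_left.2 hker] at hle
    exact hrP.trans hle
  refine DetectsDetKer.of_map hπ hp hdim.le hr ?_
  rw [map_one]
  exact detectsDetKer hpP hdimP.le hrP one_ne_zero

/-- **Theorem C**: let `(R, m)` be a catenary equidimensional Noetherian local ring of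
dimension `t`.  There is a positive integer `ℓ`, depending only on `R`, such that whenever
`x = x₁, …, x_t` is a system of parameters of `R` with `(x) ⊆ m^ℓ` and `y = y₁, …, y_t`
satisfies `(y) ⊆^A (x)` (i.e. `yᵢ = Σ_j A i j * x j`), then `y` is a system of parameters
of `R` if and only if the determinantal map `det A : R/(x)^lim → R/(y)^lim` is injective
(expressed elementwise: `det A * r ∈ (y)^lim → r ∈ (x)^lim` for all `r`). -/
theorem exists_bound_sop_iff_determinantal_map_injective
    {R : Type*} [CommRing R] [IsNoetherianRing R] [IsLocalRing R]
    {t : ℕ} (hdim : ringKrullDim R = t)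
    (hcat : IsCatenaryRing R) (hequi : IsEquidimensionalRing R) :
    ∃ ℓ : ℕ, 0 < ℓ ∧
      ∀ (x y : Fin t → R) (A : Matrix (Fin t) (Fin t) R),
        IsSOP R x → Ideal.span (Set.range x) ≤ maximalIdeal R ^ ℓ →
        (∀ i, y i = ∑ j, A i j * x j) →
        (IsSOP R y ↔
          ∀ r : R, A.det * r ∈ limitClosure (M := R) y → r ∈ limitClosure (M := R) x) := by
  rcases t with _ | r
  · refine ⟨1, one_pos, fun x y A hx _ _ => ?_⟩
    rw [Subsingleton.elim y x]
    exact ⟨fun _ r hr => by simpa using hr, fun _ => hx⟩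
  by_cases hsop : ∃ z : Fin (r + 1) → R, IsSOP R z
  swap
  · exact ⟨1, one_pos, fun x _ _ hx => absurd ⟨x, hx⟩ hsop⟩
  obtain ⟨z, hz⟩ := hsop
  obtain ⟨n, hn, hlevel⟩ := exists_forall_not_detKer_le_limitClosure hz
  obtain ⟨l, hl⟩ : ∃ l, maximalIdeal R ^ l ≤ powSpan z n :=
    Ideal.exists_pow_le_of_le_radical_of_fg (by rw [radical_powSpan z hn, hz.2])
      (IsNoetherian.noetherian _)
  refine ⟨l + 1, l.succ_pos, fun x y A hx hxl hy => ?_⟩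
  have hA : A.mulVec x = y := funext fun i => (hy i).symm
  refine ⟨fun hysop _ => mem_limitClosure_of_det_mul_mem hA fun i => hysop.2.ge (hx.1 i),
    isSOP_of_forall_mem_limitClosure hA hx.1 fun p hp => ?_⟩
  obtain ⟨B, hB⟩ := exists_mulVec_eq (x := z ^ n) (y := x) fun i =>
    hl (Ideal.pow_le_pow_right l.le_succ (hxl (Ideal.subset_span (Set.mem_range_self i))))
  exact not_detKer_le_limitClosure_of_mulVec_eq hB
    (fun i => Ideal.pow_mem_of_mem _ (hx.2.ge (hz.1 i)) n hn)
    (hlevel p (detectsDetKer_one_of_isCatenaryRing hdim hcat hequi hp))
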